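/- arXiv:1606.08122 — 2 statements merged into one kernel-verified Lean document; each statement's English description precedes it below -/
import Mathlib

section
/- Let a, b, c ≥ 1 be integers. Then there exists a spherical latin bitrade whose canonical group is isomorphic to Z_{ab+bc+ac+1} ⊕ Z_{ab+bc+ac+1}. -/
/-- A partial latin square on row set `R`, column set `C` and symbol set `S` (given as
pairwise disjoint types): a finite set of triples such that any two distinct triples agree
in at most one coordinate, and every row, column and symbol occurs in some triple. -/
def IsPartialLatinSquare {R C S : Type} (P : Finset (R × C × S)) : Prop :=
  (∀ t₁ ∈ P, ∀ t₂ ∈ P, t₁ ≠ t₂ →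
      ¬(t₁.1 = t₂.1 ∧ t₁.2.1 = t₂.2.1) ∧
      ¬(t₁.1 = t₂.1 ∧ t₁.2.2 = t₂.2.2) ∧
      ¬(t₁.2.1 = t₂.2.1 ∧ t₁.2.2 = t₂.2.2)) ∧
  (∀ r : R, ∃ t ∈ P, t.1 = r) ∧
  (∀ c : C, ∃ t ∈ P, t.2.1 = c) ∧
  (∀ s : S, ∃ t ∈ P, t.2.2 = s)

/-- The latin bitrade condition: for each triple `(r,c,s) ∈ W` there are unique
`r' ≠ r`, `c' ≠ c`, `s' ≠ s` with `(r',c,s), (r,c',s), (r,c,s') ∈ B`. -/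
def TradeCond {R C S : Type} (W B : Finset (R × C × S)) : Prop :=
  ∀ t ∈ W,
    (∃! r' : R, r' ≠ t.1 ∧ (r', t.2.1, t.2.2) ∈ B) ∧
    (∃! c' : C, c' ≠ t.2.1 ∧ (t.1, c', t.2.2) ∈ B) ∧
    (∃! s' : S, s' ≠ t.2.2 ∧ (t.1, t.2.1, s') ∈ B)

/-- A spherical latin bitrade: a connected latin bitrade `(W,B)` on finite row, column and
symbol sets `R`, `C`, `S` with `|R| + |C| + |S| = |W| + 2`.  (Connectedness says there is no
latin bitrade `(W',B')` with `W' ⊊ W` and `B' ⊊ B`; for subsets of `W` and `B` the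
"agree in at most one coordinate" condition is inherited, and the occurrence condition is
automatic on the sets of rows, columns and symbols actually occupied, so the substantive
conditions on a sub-bitrade are nonemptiness and the two trade conditions.) -/
structure SphericalLatinBitrade where
  R : Type
  C : Type
  S : Type
  instR : Fintype R
  instC : Fintype C
  instS : Fintype S
  W : Finset (R × C × S)
  B : Finset (R × C × S)
  W_nonempty : W.Nonempty
  B_nonempty : B.Nonempty
  W_pls : IsPartialLatinSquare W
  B_pls : IsPartialLatinSquare B
  tradeWB : TradeCond W B
  tradeBW : TradeCond B W
  connected : ¬ ∃ (W' B' : Finset (R × C × S)), W' ⊂ W ∧ B' ⊂ B ∧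
      W'.Nonempty ∧ B'.Nonempty ∧ TradeCond W' B' ∧ TradeCond B' W'
  spherical : @Fintype.card R instR + @Fintype.card C instC + @Fintype.card S instS
      = W.card + 2

/-- The subgroup of relations `r + c + s = 0`, for `(r,c,s) ∈ W`, in the free abelian group
on `R ⊔ C ⊔ S`. -/
def bitradeRelations (T : SphericalLatinBitrade) :
    AddSubgroup (FreeAbelianGroup (T.R ⊕ T.C ⊕ T.S)) :=
  AddSubgroup.closure
    ((fun t : T.R × T.C × T.S =>
        FreeAbelianGroup.of (Sum.inl t.1) +
        FreeAbelianGroup.of (Sum.inr (Sum.inl t.2.1)) +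
        FreeAbelianGroup.of (Sum.inr (Sum.inr t.2.2))) '' (T.W : Set (T.R × T.C × T.S)))

/-- The group `A_W`: the free abelian group on `R ⊔ C ⊔ S` modulo the relations
`r + c + s = 0` for `(r,c,s) ∈ W`. -/
abbrev groupAW (T : SphericalLatinBitrade) : Type :=
  FreeAbelianGroup (T.R ⊕ T.C ⊕ T.S) ⧸ bitradeRelations T

/-- The canonical group of a spherical latin bitrade: the torsion subgroup of `A_W`. -/
abbrev CanonicalGroup (T : SphericalLatinBitrade) : Type :=
  AddCommGroup.torsion (groupAW T)

namespace KBitrade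

set_option linter.all false
set_option linter.unusedSimpArgs false
set_option linter.unreachableTactic false
set_option linter.unusedTactic false

/-- Index set of path edges (and of multi-edges). -/
abbrev Y (m : Fin 3 → ℕ) : Type := Σ i : Fin 3, Fin (m i)

/-- Vertices (and faces). -/
abbrev X (m : Fin 3 → ℕ) : Type := Option (Y m)

/-- The `k`-th vertex of the `i`-th path; `k = 0` is the common apex. -/
def v (m : Fin 3 → ℕ) (i : Fin 3) (k : ℕ) : X m :=
  if h : 0 < k ∧ k ≤ m i then some ⟨i, ⟨k - 1, by omega⟩⟩ else none

variable {m : Fin 3 → ℕ}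

theorem v_inj {i i' : Fin 3} {k k' : ℕ} (h : k ≤ m i) (h' : k' ≤ m i') :
    v m i k = v m i' k' ↔ (k = 0 ∧ k' = 0) ∨ (i = i' ∧ k = k') := by
  unfold v
  constructor
  · intro e
    split_ifs at e with h1 h2 h2
    · right
      simp only [Option.some.injEq] at e
      have e1 : i = i' := congrArg Sigma.fst e
      subst e1
      simp at e
      exact ⟨rfl, by omega⟩
    · left; omega
  · rintro (⟨rfl, rfl⟩ | ⟨rfl, rfl⟩)
    · simp
    · rfl

theorem X_cases (x : X m) : x = v m 0 0 ∨ ∃ y : Y m, x = v m y.1 (y.2 + 1) := by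
  rcases x with _ | ⟨i, k⟩
  · left; simp [v]
  · right
    refine ⟨⟨i, k⟩, ?_⟩
    have := k.2
    simp only [v]
    rw [dif_pos (by omega)]
    simp

theorem Y_ext {y z : Y m} (h : y.1 = z.1) (h' : (y.2 : ℕ) = z.2) : y = z := by
  rcases y with ⟨i, k⟩
  rcases z with ⟨j, l⟩
  simp only at h
  subst h
  simp only at h'
  have hkl : k = l := Fin.ext h'
  rw [hkl]

/-- The four triples at each index. -/
def tri (m : Fin 3 → ℕ) (p q : Fin 3) : (Y m ⊕ Y m) × Bool → X m × X m × (Y m ⊕ Y m)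
  | (Sum.inl y, false) => (v m y.1 y.2, v m (y.1 + p) (m (y.1 + p)), Sum.inl y)
  | (Sum.inl y, true) => (v m y.1 (y.2 + 1), v m (y.1 + q) (m (y.1 + q)), Sum.inl y)
  | (Sum.inr y, false) => (v m (y.1 + p) (m (y.1 + p)), v m y.1 y.2, Sum.inr y)
  | (Sum.inr y, true) => (v m (y.1 + q) (m (y.1 + q)), v m y.1 (y.2 + 1), Sum.inr y)

/-- One half of the bitrade. -/
noncomputable def T (m : Fin 3 → ℕ) (p q : Fin 3) : Finset (X m × X m × (Y m ⊕ Y m)) :=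
  Finset.univ.image (tri m p q)

theorem mem_T {p q : Fin 3} {t : X m × X m × (Y m ⊕ Y m)} :
    t ∈ T m p q ↔ ∃ y : Y m,
      t = (v m y.1 y.2, v m (y.1 + p) (m (y.1 + p)), Sum.inl y) ∨
      t = (v m y.1 (y.2 + 1), v m (y.1 + q) (m (y.1 + q)), Sum.inl y) ∨
      t = (v m (y.1 + p) (m (y.1 + p)), v m y.1 y.2, Sum.inr y) ∨
      t = (v m (y.1 + q) (m (y.1 + q)), v m y.1 (y.2 + 1), Sum.inr y) := by
  simp only [T, Finset.mem_image, Finset.mem_univ, true_and]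
  constructor
  · rintro ⟨⟨y | y, _ | _⟩, rfl⟩ <;> exact ⟨y, by simp [tri]⟩
  · rintro ⟨y, rfl | rfl | rfl | rfl⟩
    · exact ⟨(Sum.inl y, false), rfl⟩
    · exact ⟨(Sum.inl y, true), rfl⟩
    · exact ⟨(Sum.inr y, false), rfl⟩
    · exact ⟨(Sum.inr y, true), rfl⟩

theorem mem1 (p q : Fin 3) (y : Y m) :
    (v m y.1 y.2, v m (y.1 + p) (m (y.1 + p)), Sum.inl y) ∈ T m p q :=
  mem_T.2 ⟨y, Or.inl rfl⟩
theorem mem2 (p q : Fin 3) (y : Y m) :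
    (v m y.1 (y.2 + 1), v m (y.1 + q) (m (y.1 + q)), Sum.inl y) ∈ T m p q :=
  mem_T.2 ⟨y, Or.inr (Or.inl rfl)⟩
theorem mem3 (p q : Fin 3) (y : Y m) :
    (v m (y.1 + p) (m (y.1 + p)), v m y.1 y.2, Sum.inr y) ∈ T m p q :=
  mem_T.2 ⟨y, Or.inr (Or.inr (Or.inl rfl))⟩
theorem mem4 (p q : Fin 3) (y : Y m) :
    (v m (y.1 + q) (m (y.1 + q)), v m y.1 (y.2 + 1), Sum.inr y) ∈ T m p q :=
  mem_T.2 ⟨y, Or.inr (Or.inr (Or.inr rfl))⟩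

/-- Admissible offsets. -/
def Adm (p q : Fin 3) : Prop := (p = 1 ∧ q = 2) ∨ (p = 2 ∧ q = 1)

theorem Adm.symm {p q : Fin 3} (h : Adm p q) : Adm q p := by
  unfold Adm at *; tauto

theorem v_inj_lo {y z : Y m} : v m y.1 y.2 = v m z.1 z.2 ↔
    ((y.2 : ℕ) = 0 ∧ (z.2 : ℕ) = 0) ∨ (y.1 = z.1 ∧ (y.2 : ℕ) = z.2) :=
  v_inj y.2.2.le z.2.2.le
theorem v_inj_hi {y z : Y m} : v m y.1 (y.2 + 1) = v m z.1 (z.2 + 1) ↔ y = z := by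
  rw [v_inj y.2.2 z.2.2]
  constructor
  · rintro (h | h)
    · omega
    · exact Y_ext h.1 (by omega)
  · rintro rfl; simp
theorem v_inj_lohi {y z : Y m} : v m y.1 y.2 = v m z.1 (z.2 + 1) ↔
    (y.1 = z.1 ∧ (y.2 : ℕ) = z.2 + 1) := by
  rw [v_inj y.2.2.le z.2.2]; omega
theorem v_inj_hilo {y z : Y m} : v m y.1 (y.2 + 1) = v m z.1 z.2 ↔
    (y.1 = z.1 ∧ (y.2 : ℕ) + 1 = z.2) := by
  rw [v_inj y.2.2 z.2.2.le]; omega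

theorem v_inj_top (hm : ∀ i, 1 ≤ m i) {i j : Fin 3} :
    v m i (m i) = v m j (m j) ↔ i = j := by
  rw [v_inj le_rfl le_rfl]
  have := hm i
  constructor
  · rintro (h | h)
    · omega
    · exact h.1
  · rintro rfl; simp
theorem v_lo_top (hm : ∀ i, 1 ≤ m i) {y : Y m} {j : Fin 3} :
    v m y.1 y.2 = v m j (m j) ↔ False := by
  rw [v_inj y.2.2.le le_rfl, iff_false]
  have := hm j
  have := y.2.2
  rintro (h | ⟨h, h'⟩)
  · omega
  · subst h; omega
theorem v_top_lo (hm : ∀ i, 1 ≤ m i) {y : Y m} {j : Fin 3} :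
    v m j (m j) = v m y.1 y.2 ↔ False := by
  rw [eq_comm, v_lo_top hm]
theorem v_hi_top {y : Y m} {j : Fin 3} : v m y.1 (y.2 + 1) = v m j (m j) ↔
    (y.1 = j ∧ (y.2 : ℕ) + 1 = m j) := by
  rw [v_inj y.2.2 le_rfl]; omega
theorem v_top_hi {y : Y m} {j : Fin 3} : v m j (m j) = v m y.1 (y.2 + 1) ↔
    (y.1 = j ∧ (y.2 : ℕ) + 1 = m j) := by
  rw [eq_comm, v_hi_top]

theorem T_swap {p q : Fin 3} {r c s} : (r, c, s) ∈ T m p q ↔ (c, r, s.swap) ∈ T m p q := by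
  have key : ∀ r c s, (r, c, s) ∈ T m p q → (c, r, s.swap) ∈ T m p q := by
    intro r c s h
    rw [mem_T] at h
    obtain ⟨y, h⟩ := h
    simp only [Prod.mk.injEq] at h
    rcases h with ⟨rfl, rfl, rfl⟩ | ⟨rfl, rfl, rfl⟩ | ⟨rfl, rfl, rfl⟩ | ⟨rfl, rfl, rfl⟩
    · exact mem3 p q y
    · exact mem4 p q y
    · exact mem1 p q y
    · exact mem2 p q y
  refine ⟨key r c s, fun h => ?_⟩
  simpa using key _ _ _ h

theorem fin3 {p q : Fin 3} (hpq : Adm p q) : p ≠ 0 ∧ q ≠ 0 ∧ p ≠ q ∧ p + p = q ∧ q + q = p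
    ∧ p + q = 0 := by
  rcases hpq with ⟨rfl, rfl⟩ | ⟨rfl, rfl⟩ <;> decide

theorem aux1 {p q : Fin 3} (hpq : Adm p q) : ∀ i : Fin 3, i + p ≠ i ∧ i + q ≠ i ∧ i + p ≠ i + q ∧
    i + q ≠ i + p ∧ i + p + p ≠ i ∧ i + q + q ≠ i ∧ i + p + p = i + q ∧ i + q + q = i + p
    ∧ i + p + q = i ∧ i + q + p = i := by
  rcases hpq with ⟨rfl, rfl⟩ | ⟨rfl, rfl⟩ <;> decide

theorem T_rc (hm : ∀ i, 1 ≤ m i) {p q : Fin 3} (hpq : Adm p q) {r c s s'}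
    (h : (r, c, s) ∈ T m p q) (h' : (r, c, s') ∈ T m p q) : s = s' := by
  have A := aux1 hpq
  rw [mem_T] at h h'
  obtain ⟨y, h⟩ := h
  obtain ⟨z, h'⟩ := h'
  have Ay := A y.1
  have Az := A z.1
  simp only [Prod.mk.injEq] at h h'
  rcases h with ⟨rfl, rfl, rfl⟩ | ⟨rfl, rfl, rfl⟩ | ⟨rfl, rfl, rfl⟩ | ⟨rfl, rfl, rfl⟩ <;>
  rcases h' with ⟨h1, h2, rfl⟩ | ⟨h1, h2, rfl⟩ | ⟨h1, h2, rfl⟩ | ⟨h1, h2, rfl⟩ <;>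
  simp only [v_inj_lo, v_inj_hi, v_inj_lohi, v_inj_hilo, v_inj_top hm, v_lo_top hm, v_top_lo hm,
    v_hi_top, v_top_hi, add_left_inj, Sum.inl.injEq, Sum.inr.injEq] at h1 h2 ⊢ <;>
  first
  | exact h1
  | exact h2
  | exact Y_ext h2 (by omega)
  | exact Y_ext h1 (by omega)
  | (exfalso; grind)

theorem T_rs (hm : ∀ i, 1 ≤ m i) {p q : Fin 3} (hpq : Adm p q) {r c c' s}
    (h : (r, c, s) ∈ T m p q) (h' : (r, c', s) ∈ T m p q) : c = c' := by
  have A := aux1 hpq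
  rw [mem_T] at h h'
  obtain ⟨y, h⟩ := h
  obtain ⟨z, h'⟩ := h'
  have Ay := A y.1
  simp only [Prod.mk.injEq] at h h'
  rcases h with ⟨rfl, rfl, rfl⟩ | ⟨rfl, rfl, rfl⟩ | ⟨rfl, rfl, rfl⟩ | ⟨rfl, rfl, rfl⟩ <;>
  rcases h' with ⟨h1, rfl, h2⟩ | ⟨h1, rfl, h2⟩ | ⟨h1, rfl, h2⟩ | ⟨h1, rfl, h2⟩ <;>
  first
  | (exfalso; cases h2; done)
  | (cases h2
     first
     | rfl
     | (exfalso
        simp only [v_inj_lo, v_inj_hi, v_inj_lohi, v_inj_hilo, v_inj_top hm, v_lo_top hm,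
          v_top_lo hm, v_hi_top, v_top_hi] at h1
        first
        | omega
        | grind))

theorem T_cs (hm : ∀ i, 1 ≤ m i) {p q : Fin 3} (hpq : Adm p q) {r r' c s}
    (h : (r, c, s) ∈ T m p q) (h' : (r', c, s) ∈ T m p q) : r = r' :=
  T_rs hm hpq (T_swap.1 h) (T_swap.1 h')

theorem T_disj (hm : ∀ i, 1 ≤ m i) {p q : Fin 3} (hpq : Adm p q) {t}
    (h : t ∈ T m p q) (h' : t ∈ T m q p) : False := by
  have A := aux1 hpq
  rw [mem_T] at h h'
  obtain ⟨y, h⟩ := h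
  obtain ⟨z, h'⟩ := h'
  have Ay := A y.1
  rcases h with rfl | rfl | rfl | rfl <;>
  simp only [Prod.mk.injEq] at h' <;>
  rcases h' with ⟨h1, h3, h2⟩ | ⟨h1, h3, h2⟩ | ⟨h1, h3, h2⟩ | ⟨h1, h3, h2⟩ <;>
  first
  | (cases h2; done)
  | (cases h2
     simp only [v_inj_lo, v_inj_hi, v_inj_lohi, v_inj_hilo, v_inj_top hm, v_lo_top hm,
          v_top_lo hm, v_hi_top, v_top_hi] at h1 h3
     first
     | omega
     | grind)

theorem ex_r {p q : Fin 3} {r c s} (h : (r, c, s) ∈ T m p q) : ∃ r', (r', c, s) ∈ T m q p := by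
  rw [mem_T] at h
  obtain ⟨y, h⟩ := h
  simp only [Prod.mk.injEq] at h
  rcases h with ⟨rfl, rfl, rfl⟩ | ⟨rfl, rfl, rfl⟩ | ⟨rfl, rfl, rfl⟩ | ⟨rfl, rfl, rfl⟩
  · exact ⟨_, mem2 q p y⟩
  · exact ⟨_, mem1 q p y⟩
  · exact ⟨_, mem3 q p y⟩
  · exact ⟨_, mem4 q p y⟩

theorem ex_c {p q : Fin 3} {r c s} (h : (r, c, s) ∈ T m p q) : ∃ c', (r, c', s) ∈ T m q p := by
  obtain ⟨r', h'⟩ := ex_r (T_swap.1 h)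
  exact ⟨r', T_swap.2 h'⟩

theorem mem1' (p q i j : Fin 3) (k : ℕ) (hk : k < m i) (hj : i + p = j) :
    (v m i k, v m j (m j), Sum.inl ⟨i, ⟨k, hk⟩⟩) ∈ T m p q := by
  subst hj; exact mem1 p q ⟨i, ⟨k, hk⟩⟩
theorem mem2' (p q i j : Fin 3) (k : ℕ) (hk : k < m i) (hj : i + q = j) :
    (v m i (k + 1), v m j (m j), Sum.inl ⟨i, ⟨k, hk⟩⟩) ∈ T m p q := by
  subst hj; exact mem2 p q ⟨i, ⟨k, hk⟩⟩
theorem mem3' (p q i j : Fin 3) (k : ℕ) (hk : k < m i) (hj : i + p = j) :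
    (v m j (m j), v m i k, Sum.inr ⟨i, ⟨k, hk⟩⟩) ∈ T m p q := by
  subst hj; exact mem3 p q ⟨i, ⟨k, hk⟩⟩
theorem mem4' (p q i j : Fin 3) (k : ℕ) (hk : k < m i) (hj : i + q = j) :
    (v m j (m j), v m i (k + 1), Sum.inr ⟨i, ⟨k, hk⟩⟩) ∈ T m p q := by
  subst hj; exact mem4 p q ⟨i, ⟨k, hk⟩⟩

theorem v_zero (i j : Fin 3) : v m i 0 = v m j 0 := by simp [v]

theorem ex_s_inl (hm : ∀ i, 1 ≤ m i) {p q : Fin 3} (hpq : Adm p q) {r c y}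
    (h : (r, c, Sum.inl y) ∈ T m p q) : ∃ s', (r, c, s') ∈ T m q p := by
  have A := aux1 hpq
  rw [mem_T] at h
  obtain ⟨z, h⟩ := h
  simp only [Prod.mk.injEq, Sum.inl.injEq, reduceCtorEq, and_false, or_false] at h
  rcases h with ⟨rfl, rfl, rfl⟩ | ⟨rfl, rfl, rfl⟩
  · obtain ⟨i, ⟨k, hk⟩⟩ := y
    rcases k with _ | k
    · simp only
      rw [v_zero i (i + q)]
      exact ⟨_, mem1' q p (i + q) (i + p) 0 (hm _) (by grind)⟩
    · exact ⟨_, mem2' q p i (i + p) k (by omega) rfl⟩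
  · obtain ⟨i, ⟨k, hk⟩⟩ := y
    simp only
    by_cases hk' : k + 1 < m i
    · exact ⟨_, mem1' q p i (i + q) (k + 1) hk' rfl⟩
    · have e1 : k + 1 = m i := by omega
      have := A i
      have h1 := hm (i + q)
      have := mem4' (m := m) q p (i + q) i (m (i + q) - 1) (by omega) (by grind)
      rw [e1]
      rw [show m (i + q) - 1 + 1 = m (i + q) by omega] at this
      exact ⟨_, this⟩

theorem ex_s (hm : ∀ i, 1 ≤ m i) {p q : Fin 3} (hpq : Adm p q) {r c s}
    (h : (r, c, s) ∈ T m p q) : ∃ s', (r, c, s') ∈ T m q p := by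
  rcases s with y | y
  · exact ex_s_inl hm hpq h
  · obtain ⟨s', h'⟩ := ex_s_inl hm hpq (T_swap.1 h)
    exact ⟨_, T_swap.1 h'⟩

theorem trade (hm : ∀ i, 1 ≤ m i) {p q : Fin 3} (hpq : Adm p q) :
    TradeCond (T m p q) (T m q p) := by
  rintro ⟨r, c, s⟩ h
  simp only
  refine ⟨?_, ?_, ?_⟩
  · obtain ⟨r', h'⟩ := ex_r h
    refine ⟨r', ⟨?_, h'⟩, fun x hx => T_cs hm hpq.symm hx.2 h'⟩
    rintro rfl
    exact T_disj hm hpq h h'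
  · obtain ⟨r', h'⟩ := ex_c h
    refine ⟨r', ⟨?_, h'⟩, fun x hx => T_rs hm hpq.symm hx.2 h'⟩
    rintro rfl
    exact T_disj hm hpq h h'
  · obtain ⟨r', h'⟩ := ex_s hm hpq h
    refine ⟨r', ⟨?_, h'⟩, fun x hx => T_rc hm hpq.symm hx.2 h'⟩
    rintro rfl
    exact T_disj hm hpq h h'

theorem pls (hm : ∀ i, 1 ≤ m i) {p q : Fin 3} (hpq : Adm p q) :
    IsPartialLatinSquare (T m p q) := by
  have occ : ∀ r : X m, ∃ t ∈ T m p q, t.1 = r := by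
    intro r
    rcases X_cases r with rfl | ⟨y, rfl⟩
    · exact ⟨_, mem1' p q 0 _ 0 (hm 0) rfl, rfl⟩
    · exact ⟨_, mem2 p q y, rfl⟩
  refine ⟨?_, occ, ?_, ?_⟩
  · rintro ⟨r, c, s⟩ h ⟨r', c', s'⟩ h' hne
    simp only
    refine ⟨?_, ?_, ?_⟩
    · rintro ⟨rfl, rfl⟩
      exact hne (by rw [T_rc hm hpq h h'])
    · rintro ⟨rfl, rfl⟩
      exact hne (by rw [T_rs hm hpq h h'])
    · rintro ⟨rfl, rfl⟩
      exact hne (by rw [T_cs hm hpq h h'])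
  · intro c
    obtain ⟨⟨r', c', s'⟩, h, rfl⟩ := occ c
    exact ⟨_, T_swap.1 h, rfl⟩
  · rintro (y | y)
    · exact ⟨_, mem1 p q y, rfl⟩
    · exact ⟨_, mem3 p q y, rfl⟩

theorem card_T (hm : ∀ i, 1 ≤ m i) {p q : Fin 3} (hpq : Adm p q) :
    (T m p q).card = 4 * Fintype.card (Y m) := by
  have A := aux1 hpq
  rw [T, Finset.card_image_of_injective, Finset.card_univ]
  · simp only [Fintype.card_prod, Fintype.card_sum, Fintype.card_bool]; ring
  · rintro ⟨y | y, _ | _⟩ ⟨z | z, _ | _⟩ h <;>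
    simp only [tri, Prod.mk.injEq, Sum.inl.injEq, Sum.inr.injEq, reduceCtorEq, and_false,
      and_true, v_inj_top hm] at h ⊢
    all_goals first | exact h.2.2 | skip
    all_goals
      obtain ⟨h1, h2, rfl⟩ := h
      have := A y.1
      grind

/-- Closure of a sub-bitrade, one half. -/
theorem sub_step (hm : ∀ i, 1 ≤ m i) {p q : Fin 3} (hpq : Adm p q)
    {W' B' : Finset (X m × X m × (Y m ⊕ Y m))} (hB : B' ⊆ T m q p)
    (h : TradeCond W' B') {r c s} (ht : (r, c, s) ∈ W') :
    (∀ r', (r', c, s) ∈ T m q p → (r', c, s) ∈ B') ∧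
    (∀ c', (r, c', s) ∈ T m q p → (r, c', s) ∈ B') ∧
    (∀ s', (r, c, s') ∈ T m q p → (r, c, s') ∈ B') := by
  obtain ⟨⟨x, hx, -⟩, ⟨y, hy, -⟩, ⟨z, hz, -⟩⟩ := h _ ht
  simp only at hx hy hz
  refine ⟨fun r' h' => ?_, fun r' h' => ?_, fun r' h' => ?_⟩
  · rw [T_cs hm hpq.symm h' (hB hx.2)]; exact hx.2
  · rw [T_rs hm hpq.symm h' (hB hy.2)]; exact hy.2
  · rw [T_rc hm hpq.symm h' (hB hz.2)]; exact hz.2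

/-- A sub-bitrade. -/
structure Sub (m : Fin 3 → ℕ) (p q : Fin 3) (W' B' : Finset (X m × X m × (Y m ⊕ Y m))) : Prop where
  hW : W' ⊆ T m p q
  hB : B' ⊆ T m q p
  tW : TradeCond W' B'
  tB : TradeCond B' W'

theorem Sub.symm {p q : Fin 3} {W' B'} (h : Sub m p q W' B') : Sub m q p B' W' :=
  ⟨h.hB, h.hW, h.tB, h.tW⟩

/-- All triples of symbol `s` are present. -/
def G (m : Fin 3 → ℕ) (p q : Fin 3) (W' B' : Finset (X m × X m × (Y m ⊕ Y m)))
    (s : Y m ⊕ Y m) : Prop :=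
  (∀ r c, (r, c, s) ∈ T m p q → (r, c, s) ∈ W') ∧ (∀ r c, (r, c, s) ∈ T m q p → (r, c, s) ∈ B')

theorem G.symm {p q : Fin 3} {W' B'} {s} (h : G m p q W' B' s) : G m q p B' W' s :=
  ⟨h.2, h.1⟩

theorem adj1 {p q : Fin 3} {r c r' c' s} (h : (r, c, s) ∈ T m p q) (h' : (r', c', s) ∈ T m q p) :
    r' = r ∨ c' = c := by
  rw [mem_T] at h h'
  obtain ⟨y, h⟩ := h
  obtain ⟨z, h'⟩ := h'
  simp only [Prod.mk.injEq] at h h'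
  rcases h with ⟨rfl, rfl, rfl⟩ | ⟨rfl, rfl, rfl⟩ | ⟨rfl, rfl, rfl⟩ | ⟨rfl, rfl, rfl⟩ <;>
  rcases h' with ⟨rfl, rfl, h2⟩ | ⟨rfl, rfl, h2⟩ | ⟨rfl, rfl, h2⟩ | ⟨rfl, rfl, h2⟩ <;>
  first
  | (exfalso; cases h2; done)
  | (cases h2; simp)

theorem adj2 {p q : Fin 3} {r c r' c' s} (h : (r, c, s) ∈ T m p q) (h' : (r', c', s) ∈ T m p q) :
    (r' = r ∧ c' = c) ∨ (r, c', s) ∈ T m q p := by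
  rw [mem_T] at h h'
  obtain ⟨y, h⟩ := h
  obtain ⟨z, h'⟩ := h'
  simp only [Prod.mk.injEq] at h h'
  rcases h with ⟨rfl, rfl, rfl⟩ | ⟨rfl, rfl, rfl⟩ | ⟨rfl, rfl, rfl⟩ | ⟨rfl, rfl, rfl⟩ <;>
  rcases h' with ⟨rfl, rfl, h2⟩ | ⟨rfl, rfl, h2⟩ | ⟨rfl, rfl, h2⟩ | ⟨rfl, rfl, h2⟩ <;>
  first
  | (exfalso; cases h2; done)
  | (cases h2
     first
     | exact Or.inl ⟨rfl, rfl⟩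
     | exact Or.inr (mem1 q p _)
     | exact Or.inr (mem2 q p _)
     | exact Or.inr (mem3 q p _)
     | exact Or.inr (mem4 q p _))

theorem G_of_mem (hm : ∀ i, 1 ≤ m i) {p q : Fin 3} (hpq : Adm p q) {W' B'}
    (h : Sub m p q W' B') {r c s} (ht : (r, c, s) ∈ W') : G m p q W' B' s := by
  have st := sub_step hm hpq h.hB h.tW ht
  constructor
  · intro r' c' h'
    rcases adj2 (h.hW ht) h' with ⟨rfl, rfl⟩ | h2
    · exact ht
    · exact (sub_step hm hpq.symm h.hW h.tB (st.2.1 _ h2)).1 _ h'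
  · intro r' c' h'
    rcases adj1 (h.hW ht) h' with rfl | rfl
    · exact st.2.1 _ h'
    · exact st.1 _ h'

theorem link (hm : ∀ i, 1 ≤ m i) {p q : Fin 3} (hpq : Adm p q) {W' B'}
    (h : Sub m p q W' B') {r c s s'} (h1 : (r, c, s) ∈ T m p q) (h2 : (r, c, s') ∈ T m q p) :
    G m p q W' B' s ↔ G m p q W' B' s' := by
  constructor
  · intro hs
    have := (sub_step hm hpq h.hB h.tW (hs.1 _ _ h1)).2.2 _ h2
    exact (G_of_mem hm hpq.symm h.symm this).symm
  · intro hs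
    have := (sub_step hm hpq.symm h.hW h.tB (hs.2 _ _ h2)).2.2 _ h1
    exact G_of_mem hm hpq h this

theorem G_all (hm : ∀ i, 1 ≤ m i) {p q : Fin 3} (hpq : Adm p q) {W' B'}
    (h : Sub m p q W' B') (s : Y m ⊕ Y m) :
    G m p q W' B' s ↔ G m p q W' B' (Sum.inl ⟨0, ⟨0, hm 0⟩⟩) := by
  have A := aux1 hpq
  have la : ∀ i k (hk : k < m i), G m p q W' B' (Sum.inl ⟨i, ⟨k, hk⟩⟩) ↔
      G m p q W' B' (Sum.inl ⟨i, ⟨0, hm i⟩⟩) := by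
    intro i k
    induction k with
    | zero => intro _; rfl
    | succ k ih =>
      intro hk
      rw [← ih (by omega)]
      exact (link hm hpq h (mem2' p q i (i + q) k (by omega) rfl)
        (mem1' q p i (i + q) (k + 1) hk rfl)).symm
  have lb : ∀ i k (hk : k < m i), G m p q W' B' (Sum.inr ⟨i, ⟨k, hk⟩⟩) ↔
      G m p q W' B' (Sum.inr ⟨i, ⟨0, hm i⟩⟩) := by
    intro i k
    induction k with
    | zero => intro _; rfl
    | succ k ih =>
      intro hk
      rw [← ih (by omega)]
      exact (link hm hpq h (mem4' p q i (i + q) k (by omega) rfl)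
        (mem3' q p i (i + q) (k + 1) hk rfl)).symm
  have lc : ∀ i, G m p q W' B' (Sum.inl ⟨i, ⟨0, hm i⟩⟩) ↔
      G m p q W' B' (Sum.inl ⟨i + q, ⟨0, hm _⟩⟩) := by
    intro i
    have h1 := mem1' (m := m) p q i (i + p) 0 (hm i) rfl
    rw [v_zero i (i + q)] at h1
    exact link hm hpq h h1 (mem1' q p (i + q) (i + p) 0 (hm _) (by grind))
  have lc' : ∀ i, G m p q W' B' (Sum.inl ⟨i, ⟨0, hm i⟩⟩) ↔
      G m p q W' B' (Sum.inl ⟨0, ⟨0, hm _⟩⟩) := by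
    have h1 := lc 0
    have h2 := lc (0 + q)
    intro i
    rcases hpq with ⟨rfl, rfl⟩ | ⟨rfl, rfl⟩
    · fin_cases i
      · rfl
      · exact (h1.trans h2).symm
      · exact h1.symm
    · fin_cases i
      · rfl
      · exact h1.symm
      · exact (h1.trans h2).symm
  have ld : ∀ i, G m p q W' B' (Sum.inr ⟨i + q, ⟨0, hm _⟩⟩) ↔
      G m p q W' B' (Sum.inl ⟨i, ⟨0, hm i⟩⟩) := by
    intro i
    have g1 := hm i
    have g2 := hm (i + q)
    rw [← la i (m i - 1) (by omega), ← lb (i + q) (m (i + q) - 1) (by omega)]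
    have h1 := mem2' (m := m) p q i (i + q) (m i - 1) (by omega) rfl
    have h2 := mem4' (m := m) q p (i + q) i (m (i + q) - 1) (by omega) (by grind)
    rw [show m (i + q) - 1 + 1 = m (i + q) by omega] at h2
    rw [show m i - 1 + 1 = m i by omega] at h1
    exact (link hm hpq h h1 h2).symm
  have ld' : ∀ j, G m p q W' B' (Sum.inr ⟨j, ⟨0, hm _⟩⟩) ↔
      G m p q W' B' (Sum.inl ⟨0, ⟨0, hm _⟩⟩) := by
    intro j
    have := ld (j + p)
    have e : j + p + q = j := by grind
    have e2 : (⟨j + p + q, ⟨0, hm _⟩⟩ : Y m) = ⟨j, ⟨0, hm _⟩⟩ := Y_ext e rfl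
    rw [e2] at this
    exact this.trans (lc' _)
  rcases s with ⟨i, ⟨k, hk⟩⟩ | ⟨i, ⟨k, hk⟩⟩
  · exact (la i k hk).trans (lc' i)
  · exact (lb i k hk).trans (ld' i)

theorem conn (hm : ∀ i, 1 ≤ m i) {p q : Fin 3} (hpq : Adm p q) :
    ¬ ∃ (W' B' : Finset (X m × X m × (Y m ⊕ Y m))), W' ⊂ T m p q ∧ B' ⊂ T m q p ∧
      W'.Nonempty ∧ B'.Nonempty ∧ TradeCond W' B' ∧ TradeCond B' W' := by
  rintro ⟨W', B', hW, hB, ⟨⟨r, c, s⟩, hn⟩, -, t1, t2⟩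
  have S : Sub m p q W' B' := ⟨hW.1, hB.1, t1, t2⟩
  have hs := (G_all hm hpq S s).1 (G_of_mem hm hpq S hn)
  apply hW.2
  rintro ⟨r', c', s'⟩ hmem
  have hG := (G_all hm hpq S s').2 hs
  exact hG.1 _ _ hmem

/-- The bitrade. -/
noncomputable def bt (m : Fin 3 → ℕ) (hm : ∀ i, 1 ≤ m i) : SphericalLatinBitrade where
  R := X m
  C := X m
  S := Y m ⊕ Y m
  instR := inferInstance
  instC := inferInstance
  instS := inferInstance
  W := T m 2 1
  B := T m 1 2
  W_nonempty := ⟨_, mem1' 2 1 0 _ 0 (hm 0) rfl⟩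
  B_nonempty := ⟨_, mem1' 1 2 0 _ 0 (hm 0) rfl⟩
  W_pls := pls hm (Or.inr ⟨rfl, rfl⟩)
  B_pls := pls hm (Or.inl ⟨rfl, rfl⟩)
  tradeWB := trade hm (Or.inr ⟨rfl, rfl⟩)
  tradeBW := trade hm (Or.inl ⟨rfl, rfl⟩)
  connected := conn hm (Or.inr ⟨rfl, rfl⟩)
  spherical := by
    rw [card_T hm (Or.inr ⟨rfl, rfl⟩)]
    simp only [Fintype.card_option, Fintype.card_sum]
    ring

/-- Torsion of a group isomorphic to `ℤ × ℤ × Z` with `Z` of exponent dividing `n > 0`. -/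
theorem torsion_iso {A Z : Type} [AddCommGroup A] [AddCommGroup Z] (n : ℕ) (hn : 0 < n)
    (hZ : ∀ z : Z, n • z = 0) (Φ : A →+ ℤ × ℤ × Z) (ψ : Z →+ A) (o w : A)
    (h1 : ∀ x, x = (Φ x).1 • o + (Φ x).2.1 • w + ψ (Φ x).2.2)
    (h2 : ∀ z, (Φ (ψ z)).2.2 = z) : Nonempty (AddCommGroup.torsion A ≃+ Z) := by
  have hmem : ∀ z, ψ z ∈ AddCommGroup.torsion A := by
    intro z
    change IsOfFinAddOrder (ψ z)
    rw [isOfFinAddOrder_iff_nsmul_eq_zero]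
    exact ⟨n, hn, by rw [← map_nsmul, hZ, map_zero]⟩
  let ψ' : Z →+ AddCommGroup.torsion A := ψ.codRestrict _ hmem
  refine ⟨(AddEquiv.ofBijective ψ' ⟨?_, ?_⟩).symm⟩
  · intro x y hxy
    have : ψ x = ψ y := congrArg Subtype.val hxy
    rw [← h2 x, this, h2]
  · rintro ⟨x, hx⟩
    refine ⟨(Φ x).2.2, Subtype.ext ?_⟩
    change ψ (Φ x).2.2 = x
    change IsOfFinAddOrder x at hx
    rw [isOfFinAddOrder_iff_nsmul_eq_zero] at hx
    obtain ⟨k, hk, hx⟩ := hx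
    have e : k • Φ x = 0 := by rw [← map_nsmul, hx, map_zero]
    have e1 : (Φ x).1 = 0 := by
      have := congrArg Prod.fst e
      simp at this
      omega
    have e2 : (Φ x).2.1 = 0 := by
      have := congrArg (fun t => t.2.1) e
      simp at this
      omega
    conv_rhs => rw [h1 x, e1, e2]
    simp

/-- The order. -/
abbrev nn (m : Fin 3 → ℕ) : ℕ := m 0 * m 1 + m 1 * m 2 + m 0 * m 2 + 1

abbrev Z (m : Fin 3 → ℕ) : Type := ZMod (nn m) × ZMod (nn m)

def bet (m : Fin 3 → ℕ) : Fin 3 → Z m := ![(1, 0), (0, 1), (-1, -1)]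

def kap (m : Fin 3 → ℕ) (i : Fin 3) : Z m := m (i + 2) • bet m (i + 2) - m (i + 1) • bet m (i + 1)

/-- Linear labelling of the vertices. -/
def lab {A : Type} [AddCommGroup A] (g : Fin 3 → A) : X m → A
  | none => 0
  | some y => ((y.2 : ℕ) + 1) • g y.1

theorem lab_v {A : Type} [AddCommGroup A] (g : Fin 3 → A) (i : Fin 3) (k : ℕ) (hk : k ≤ m i) :
    lab g (v m i k) = k • g i := by
  unfold v
  split_ifs with h
  · simp only [lab]
    rw [show k - 1 + 1 = k by omega]
  · obtain rfl : k = 0 := by omega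
    simp [lab]

theorem kap_bet (i : Fin 3) :
    bet m i + m (i + 1) • kap m (i + 1) = m (i + 2) • kap m (i + 2) := by
  have h : (m 0 : ZMod (nn m)) * m 1 + m 1 * m 2 + m 0 * m 2 + 1 = 0 := by
    have := ZMod.natCast_self (nn m)
    simp only [nn] at this ⊢
    push_cast at this
    exact this
  have a1 : (1 : Fin 3) + 1 = 2 := rfl
  have a2 : (1 : Fin 3) + 2 = 0 := rfl
  have a3 : (2 : Fin 3) + 1 = 0 := rfl
  have a4 : (2 : Fin 3) + 2 = 1 := rfl
  fin_cases i <;> ext <;>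
  simp [kap, bet, a1, a2, a3, a4] <;>
  first
  | ring1
  | linear_combination h
  | linear_combination -h

/-- Labels in the target. -/
def val (m : Fin 3 → ℕ) : X m ⊕ X m ⊕ (Y m ⊕ Y m) → ℤ × ℤ × Z m
  | Sum.inl x => (1, 0, lab (bet m) x)
  | Sum.inr (Sum.inl x) => (0, 1, lab (kap m) x)
  | Sum.inr (Sum.inr (Sum.inl y)) =>
      (-1, -1, - ((y.2 : ℕ) • bet m y.1 + m (y.1 + 2) • kap m (y.1 + 2)))
  | Sum.inr (Sum.inr (Sum.inr y)) =>
      (-1, -1, - (m (y.1 + 2) • bet m (y.1 + 2) + (y.2 : ℕ) • kap m y.1))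

theorem val_rel {r c s} (h : (r, c, s) ∈ T m 2 1) :
    val m (Sum.inl r) + val m (Sum.inr (Sum.inl c)) + val m (Sum.inr (Sum.inr s)) = 0 := by
  rw [mem_T] at h
  obtain ⟨y, h⟩ := h
  simp only [Prod.mk.injEq] at h
  have hl := y.2.2.le
  have hh : (y.2 : ℕ) + 1 ≤ m y.1 := y.2.2
  rcases h with ⟨rfl, rfl, rfl⟩ | ⟨rfl, rfl, rfl⟩ | ⟨rfl, rfl, rfl⟩ | ⟨rfl, rfl, rfl⟩ <;>
  simp only [val, lab_v _ _ _ hl, lab_v _ _ _ hh, lab_v _ _ _ le_rfl] <;>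
  refine Prod.ext (by simp) (Prod.ext (by simp) ?_)
  · simp
  · simp only [Prod.snd_add, ← kap_bet, Prod.snd_zero, succ_nsmul]
    abel
  · simp
  · simp only [Prod.snd_add, Prod.snd_zero, succ_nsmul]
    simp only [kap]
    abel

noncomputable section grp

variable (m)

def rels : AddSubgroup (FreeAbelianGroup (X m ⊕ X m ⊕ (Y m ⊕ Y m))) :=
  AddSubgroup.closure
    ((fun t : X m × X m × (Y m ⊕ Y m) =>
        FreeAbelianGroup.of (Sum.inl t.1) +
        FreeAbelianGroup.of (Sum.inr (Sum.inl t.2.1)) +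
        FreeAbelianGroup.of (Sum.inr (Sum.inr t.2.2))) '' (T m 2 1 : Set (X m × X m × (Y m ⊕ Y m))))

abbrev AA (_ : ∀ i, 1 ≤ m i) : Type := FreeAbelianGroup (X m ⊕ X m ⊕ (Y m ⊕ Y m)) ⧸ rels m

variable (hm : ∀ i, 1 ≤ m i)

def gen (x : X m ⊕ X m ⊕ (Y m ⊕ Y m)) : AA m hm :=
  QuotientAddGroup.mk' (rels m)
    (FreeAbelianGroup.of (α := X m ⊕ X m ⊕ (Y m ⊕ Y m)) x)

theorem gen_rel {r c s} (h : (r, c, s) ∈ T m 2 1) :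
    gen m hm (Sum.inl r) + gen m hm (Sum.inr (Sum.inl c)) + gen m hm (Sum.inr (Sum.inr s)) = 0 := by
  unfold gen
  rw [← map_add, ← map_add]
  refine (QuotientAddGroup.eq_zero_iff _).2 ?_
  exact AddSubgroup.subset_closure ⟨(r, c, s), h, rfl⟩

def Phi : AA m hm →+ ℤ × ℤ × Z m :=
  QuotientAddGroup.lift (rels m)
    (FreeAbelianGroup.lift (α := X m ⊕ X m ⊕ (Y m ⊕ Y m)) (val m)) (by
      intro x hx
      have : rels m ≤
          (FreeAbelianGroup.lift (α := X m ⊕ X m ⊕ (Y m ⊕ Y m)) (val m)).ker := by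
        unfold rels
        rw [AddSubgroup.closure_le]
        rintro _ ⟨⟨r, c, s⟩, h, rfl⟩
        have h0 := val_rel (show (r, c, s) ∈ T m 2 1 from h)
        change FreeAbelianGroup.lift (α := X m ⊕ X m ⊕ (Y m ⊕ Y m)) (val m) _ = 0
        rw [map_add, map_add, FreeAbelianGroup.lift_apply_of, FreeAbelianGroup.lift_apply_of,
          FreeAbelianGroup.lift_apply_of]
        exact h0
      exact this hx)

theorem Phi_gen (x) : Phi m hm (gen m hm x) = val m x := by
  unfold Phi gen
  exact FreeAbelianGroup.lift_apply_of _ _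

theorem hom_ext {B : Type} [AddCommGroup B] {f g : AA m hm →+ B}
    (h1 : ∀ x, f (gen m hm (Sum.inl x)) = g (gen m hm (Sum.inl x)))
    (h2 : ∀ x, f (gen m hm (Sum.inr (Sum.inl x))) = g (gen m hm (Sum.inr (Sum.inl x)))) :
    f = g := by
  have h3 : ∀ s, f (gen m hm (Sum.inr (Sum.inr s))) = g (gen m hm (Sum.inr (Sum.inr s))) := by
    intro s
    obtain ⟨⟨r, c, s'⟩, h, rfl⟩ := (pls (m := m) hm (p := 2) (q := 1) (Or.inr ⟨rfl, rfl⟩)).2.2.2 s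
    have e := gen_rel m hm h
    rw [add_eq_zero_iff_neg_eq] at e
    rw [← e, map_neg, map_neg, map_add, map_add, h1, h2]
  refine QuotientAddGroup.addMonoidHom_ext _ (FreeAbelianGroup.lift_ext _ _ ?_)
  rintro (x | x | s)
  · exact h1 x
  · exact h2 x
  · exact h3 s

/-- Vertex and face elements. -/
def V (i : Fin 3) (k : ℕ) : AA m hm := gen m hm (Sum.inl (v m i k))
def F (i : Fin 3) (k : ℕ) : AA m hm := gen m hm (Sum.inr (Sum.inl (v m i k)))

def be (i : Fin 3) : AA m hm := F m hm (i + 2) (m (i + 2)) - F m hm (i + 1) (m (i + 1))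
def ka (i : Fin 3) : AA m hm := V m hm (i + 2) (m (i + 2)) - V m hm (i + 1) (m (i + 1))

theorem V_eq (i : Fin 3) (k : ℕ) (hk : k ≤ m i) : V m hm i k = V m hm 0 0 + k • be m hm i := by
  induction k with
  | zero => simp [V, v_zero i 0]
  | succ k ih =>
    have h1 := gen_rel m hm (mem1' 2 1 i _ k hk rfl)
    have h2 := gen_rel m hm (mem2' 2 1 i _ k hk rfl)
    have e : V m hm i (k + 1) = V m hm i k + be m hm i := by
      unfold V be F
      rw [← sub_eq_zero] at h1 ⊢
      rw [← sub_eq_zero.2 (h2.trans (sub_eq_zero.1 h1).symm)]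
      abel
    rw [e, ih (by omega), succ_nsmul]
    abel

theorem F_eq (i : Fin 3) (k : ℕ) (hk : k ≤ m i) : F m hm i k = F m hm 0 0 + k • ka m hm i := by
  induction k with
  | zero => simp [F, v_zero i 0]
  | succ k ih =>
    have h1 := gen_rel m hm (mem3' 2 1 i _ k hk rfl)
    have h2 := gen_rel m hm (mem4' 2 1 i _ k hk rfl)
    have e : F m hm i (k + 1) = F m hm i k + ka m hm i := by
      unfold F ka V
      rw [← sub_eq_zero] at h1 ⊢
      rw [← sub_eq_zero.2 (h2.trans (sub_eq_zero.1 h1).symm)]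
      abel
    rw [e, ih (by omega), succ_nsmul]
    abel

theorem be_sum : be m hm 0 + be m hm 1 + be m hm 2 = 0 := by
  have a1 : (1 : Fin 3) + 1 = 2 := rfl
  have a2 : (1 : Fin 3) + 2 = 0 := rfl
  have a3 : (2 : Fin 3) + 1 = 0 := rfl
  have a4 : (2 : Fin 3) + 2 = 1 := rfl
  simp only [be, a1, a2, a3, a4, zero_add]
  abel

theorem ka_eq (i : Fin 3) : ka m hm i = m (i + 2) • be m hm (i + 2) - m (i + 1) • be m hm (i + 1) := by
  rw [ka, V_eq m hm _ _ le_rfl, V_eq m hm _ _ le_rfl]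
  abel

theorem be_eq (i : Fin 3) : be m hm i = m (i + 2) • ka m hm (i + 2) - m (i + 1) • ka m hm (i + 1) := by
  conv_lhs => rw [be, F_eq m hm _ _ le_rfl, F_eq m hm _ _ le_rfl]
  abel

theorem be_tors : nn m • be m hm 0 = 0 ∧ nn m • be m hm 1 = 0 := by
  have a1 : (1 : Fin 3) + 1 = 2 := rfl
  have a2 : (1 : Fin 3) + 2 = 0 := rfl
  have a3 : (2 : Fin 3) + 1 = 0 := rfl
  have a4 : (2 : Fin 3) + 2 = 1 := rfl
  have h0 := be_eq m hm 0
  have h1 := be_eq m hm 1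
  have k0 := ka_eq m hm 0
  have k1 := ka_eq m hm 1
  have k2 := ka_eq m hm 2
  have hs : be m hm 2 = - be m hm 0 - be m hm 1 := by
    have := be_sum m hm
    rw [← sub_eq_zero, ← this]; abel
  simp only [a1, a2, a3, a4, zero_add] at h0 h1 k0 k1 k2
  simp only [← natCast_zsmul] at *
  rw [hs] at k0 k1
  rw [k1, k2] at h0
  rw [k0, k2] at h1
  constructor
  · rw [← sub_eq_zero] at h0
    rw [← h0]; simp only [nn]; push_cast; module
  · rw [← sub_eq_zero] at h1
    rw [← h1]; simp only [nn]; push_cast; module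

def psi : Z m →+ AA m hm :=
  AddMonoidHom.coprod
    (ZMod.lift (nn m) ⟨zmultiplesHom _ (be m hm 0), by
      rw [zmultiplesHom_apply, natCast_zsmul]; exact (be_tors m hm).1⟩)
    (ZMod.lift (nn m) ⟨zmultiplesHom _ (be m hm 1), by
      rw [zmultiplesHom_apply, natCast_zsmul]; exact (be_tors m hm).2⟩)

theorem psi_10 : psi m hm (1, 0) = be m hm 0 := by
  have := ZMod.lift_coe (nn m) ⟨zmultiplesHom _ (be m hm 0), by
      rw [zmultiplesHom_apply, natCast_zsmul]; exact (be_tors m hm).1⟩ 1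
  simp only [psi, AddMonoidHom.coprod_apply, map_zero, add_zero]
  simpa using this

theorem psi_01 : psi m hm (0, 1) = be m hm 1 := by
  have := ZMod.lift_coe (nn m) ⟨zmultiplesHom _ (be m hm 1), by
      rw [zmultiplesHom_apply, natCast_zsmul]; exact (be_tors m hm).2⟩ 1
  simp only [psi, AddMonoidHom.coprod_apply, map_zero, zero_add]
  simpa using this

theorem psi_bet (i : Fin 3) : psi m hm (bet m i) = be m hm i := by
  fin_cases i
  · exact psi_10 m hm
  · exact psi_01 m hm
  · have e : ((-1, -1) : Z m) = - (1, 0) - (0, 1) := by ext <;> simp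
    change psi m hm (-1, -1) = be m hm 2
    rw [e, map_sub, map_neg, psi_10, psi_01]
    have := be_sum m hm
    rw [← sub_eq_zero, ← neg_eq_zero, ← this]; abel

theorem psi_kap (i : Fin 3) : psi m hm (kap m i) = ka m hm i := by
  rw [kap, map_sub, map_nsmul, map_nsmul, psi_bet, psi_bet, ka_eq]

theorem Phi_be (i : Fin 3) : (Phi m hm (be m hm i)).2.2 = bet m i := by
  rw [be, map_sub, F, F, Phi_gen, Phi_gen]
  simp only [val, lab_v _ _ _ le_rfl, Prod.snd_sub]
  rw [← kap_bet]; abel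

theorem main_iso0 : Nonempty (AddCommGroup.torsion (AA m hm) ≃+ Z m) := by
  refine torsion_iso (nn m) (by simp [nn]) ?_ (Phi m hm) (psi m hm) (V m hm 0 0) (F m hm 0 0) ?_ ?_
  · intro z
    refine Prod.ext ?_ ?_
    · change nn m • z.1 = 0
      rw [nsmul_eq_mul, ZMod.natCast_self, zero_mul]
    · change nn m • z.2 = 0
      rw [nsmul_eq_mul, ZMod.natCast_self, zero_mul]
  · let g1 : ℤ × ℤ × Z m →+ AA m hm :=
      (zmultiplesHom _ (V m hm 0 0)).coprod ((zmultiplesHom _ (F m hm 0 0)).coprod (psi m hm))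
    have key : AddMonoidHom.id (AA m hm) = g1.comp (Phi m hm) := by
      apply hom_ext
      · intro x
        obtain ⟨i, k, hk, rfl⟩ : ∃ i k, k ≤ m i ∧ x = v m i k := by
          rcases X_cases x with h | ⟨y, h⟩
          · exact ⟨0, 0, by omega, h⟩
          · exact ⟨_, _, y.2.2, h⟩
        have := V_eq m hm i k hk
        simp only [AddMonoidHom.id_apply, AddMonoidHom.comp_apply, Phi_gen, g1, val,
          AddMonoidHom.coprod_apply, lab_v _ _ _ hk, map_nsmul, psi_bet]
        simpa [V] using this
      · intro x
        obtain ⟨i, k, hk, rfl⟩ : ∃ i k, k ≤ m i ∧ x = v m i k := by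
          rcases X_cases x with h | ⟨y, h⟩
          · exact ⟨0, 0, by omega, h⟩
          · exact ⟨_, _, y.2.2, h⟩
        have := F_eq m hm i k hk
        simp only [AddMonoidHom.id_apply, AddMonoidHom.comp_apply, Phi_gen, g1, val,
          AddMonoidHom.coprod_apply, lab_v _ _ _ hk, map_nsmul, psi_kap]
        simpa [F] using this
    intro x
    have := DFunLike.congr_fun key x
    simp only [AddMonoidHom.id_apply, AddMonoidHom.comp_apply, g1, AddMonoidHom.coprod_apply,
      zmultiplesHom_apply] at this
    rw [add_assoc]
    exact this
  · let pr : ℤ × ℤ × Z m →+ Z m := (AddMonoidHom.snd _ _).comp (AddMonoidHom.snd _ _)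
    rintro ⟨x, y⟩
    obtain ⟨x, rfl⟩ := ZMod.intCast_surjective x
    obtain ⟨y, rfl⟩ := ZMod.intCast_surjective y
    have e : (((x : ZMod (nn m)), (y : ZMod (nn m))) : Z m) = x • bet m 0 + y • bet m 1 := by
      ext <;> simp [bet]
    change (pr.comp (Phi m hm)) (psi m hm _) = _
    rw [e, map_add, map_add, map_zsmul, map_zsmul, map_zsmul, map_zsmul, psi_bet, psi_bet]
    change x • (Phi m hm (be m hm 0)).2.2 + y • (Phi m hm (be m hm 1)).2.2 = _
    rw [Phi_be, Phi_be]

theorem main_iso : Nonempty (CanonicalGroup (bt m hm) ≃+ Z m) := main_iso0 m hm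

end grp

end KBitrade

/-- For integers `a, b, c ≥ 1` there is a spherical latin bitrade whose canonical group
is isomorphic to `ℤ/(ab+bc+ac+1) ⊕ ℤ/(ab+bc+ac+1)`. -/
theorem exists_spherical_bitrade_canonical_group_rank_two_square
    (a b c : ℕ) (ha : 1 ≤ a) (hb : 1 ≤ b) (hc : 1 ≤ c) :
    ∃ T : SphericalLatinBitrade,
      Nonempty (CanonicalGroup T ≃+
        (ZMod (a * b + b * c + a * c + 1) × ZMod (a * b + b * c + a * c + 1))) := by
  have hm : ∀ i, 1 ≤ (![a, b, c] : Fin 3 → ℕ) i := by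
    intro i
    fin_cases i <;> assumption
  exact ⟨KBitrade.bt ![a, b, c] hm, KBitrade.main_iso ![a, b, c] hm⟩
end

section
/- Let n, m ≥ 2 be integers with n ≠ m. Then there exists a spherical latin bitrade whose canonical group is isomorphic to Z_n ⊕ Z_m. -/
/-- Combinatorial data of an alternating plane digraph: arcs `E`, each with source and target row,
and the two faces next to it. -/
structure ArcData (E R C S : Type) where
  src : E → R
  tgt : E → R
  cf : E → C
  sf : E → S
  loopless : ∀ e, src e ≠ tgt e
  inj_cs : ∀ e e', cf e = cf e' → sf e = sf e' → e = e'
  inj_tc : ∀ e e', tgt e = tgt e' → cf e = cf e' → e = e'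
  inj_ts : ∀ e e', tgt e = tgt e' → sf e = sf e' → e = e'
  inj_sc : ∀ e e', src e = src e' → cf e = cf e' → e = e'
  inj_ss : ∀ e e', src e = src e' → sf e = sf e' → e = e'
  nextC : ∀ e, ∃ e', src e' = tgt e ∧ cf e' = cf e
  nextS : ∀ e, ∃ e', src e' = tgt e ∧ sf e' = sf e
  occR : ∀ r, ∃ e, tgt e = r
  occC : ∀ c, ∃ e, cf e = c
  occS : ∀ s, ∃ e, sf e = s
  conn : ∀ X : E → Prop,
    (∀ e e', tgt e = src e' → (sf e = sf e' ∨ cf e = cf e') → (X e ↔ X e')) →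
    ∀ e e', X e → X e'

namespace ArcData

variable {E R C S : Type} (D : ArcData E R C S)

def wt (e : E) : R × C × S := (D.tgt e, D.cf e, D.sf e)

def bt (e : E) : R × C × S := (D.src e, D.cf e, D.sf e)

theorem wt_inj : Function.Injective D.wt := by
  intro e e' h
  simp only [wt, Prod.mk.injEq] at h
  exact D.inj_cs _ _ h.2.1 h.2.2

theorem bt_inj : Function.Injective D.bt := by
  intro e e' h
  simp only [bt, Prod.mk.injEq] at h
  exact D.inj_cs _ _ h.2.1 h.2.2

theorem prevC [Finite E] (e : E) : ∃ e', tgt D e' = src D e ∧ cf D e' = cf D e := by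
  choose f hf using D.nextC
  have hi : Function.Injective f := by
    intro a b hab
    apply D.inj_tc
    · rw [← (hf a).1, ← (hf b).1, hab]
    · rw [← (hf a).2, ← (hf b).2, hab]
  obtain ⟨a, rfl⟩ := Finite.surjective_of_injective hi e
  exact ⟨a, (hf a).1.symm, (hf a).2.symm⟩

theorem prevS [Finite E] (e : E) : ∃ e', tgt D e' = src D e ∧ sf D e' = sf D e := by
  choose f hf using D.nextS
  have hi : Function.Injective f := by
    intro a b hab
    apply D.inj_ts
    · rw [← (hf a).1, ← (hf b).1, hab]
    · rw [← (hf a).2, ← (hf b).2, hab]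
  obtain ⟨a, rfl⟩ := Finite.surjective_of_injective hi e
  exact ⟨a, (hf a).1.symm, (hf a).2.symm⟩

/-- The reversed digraph. -/
def rev [Finite E] : ArcData E R C S where
  src := D.tgt
  tgt := D.src
  cf := D.cf
  sf := D.sf
  loopless e := (D.loopless e).symm
  inj_cs := D.inj_cs
  inj_tc := D.inj_sc
  inj_ts := D.inj_ss
  inj_sc := D.inj_tc
  inj_ss := D.inj_ts
  nextC := D.prevC
  nextS := D.prevS
  occR r := by
    obtain ⟨e, he⟩ := D.occR r
    obtain ⟨e', he', _⟩ := D.nextC e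
    exact ⟨e', he'.trans he⟩
  occC := D.occC
  occS := D.occS
  conn X hX := D.conn X fun e e' h1 h2 =>
    (hX e' e h1.symm (h2.imp Eq.symm Eq.symm)).symm

variable [Fintype E] [DecidableEq R] [DecidableEq C] [DecidableEq S]

def W : Finset (R × C × S) := Finset.univ.image D.wt

def B : Finset (R × C × S) := Finset.univ.image D.bt

theorem mem_W {t} : t ∈ D.W ↔ ∃ e, D.wt e = t := by simp [W]

theorem mem_B {t} : t ∈ D.B ↔ ∃ e, D.bt e = t := by simp [B]

theorem pls : IsPartialLatinSquare D.W := by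
  refine ⟨?_, ?_, ?_, ?_⟩
  · intro t₁ h₁ t₂ h₂ hne
    rw [mem_W] at h₁ h₂
    obtain ⟨e, rfl⟩ := h₁
    obtain ⟨e', rfl⟩ := h₂
    refine ⟨fun h => hne ?_, fun h => hne ?_, fun h => hne ?_⟩
    · rw [D.inj_tc _ _ h.1 h.2]
    · rw [D.inj_ts _ _ h.1 h.2]
    · rw [D.inj_cs _ _ h.1 h.2]
  · intro r
    obtain ⟨e, he⟩ := D.occR r
    exact ⟨_, D.mem_W.2 ⟨e, rfl⟩, he⟩
  · intro r
    obtain ⟨e, he⟩ := D.occC r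
    exact ⟨_, D.mem_W.2 ⟨e, rfl⟩, he⟩
  · intro r
    obtain ⟨e, he⟩ := D.occS r
    exact ⟨_, D.mem_W.2 ⟨e, rfl⟩, he⟩

theorem trade : TradeCond D.W D.B := by
  intro t ht
  rw [mem_W] at ht
  obtain ⟨e, rfl⟩ := ht
  refine ⟨⟨D.src e, ⟨D.loopless e, D.mem_B.2 ⟨e, rfl⟩⟩, ?_⟩, ?_, ?_⟩
  · rintro r ⟨_, hr⟩
    obtain ⟨e', he'⟩ := D.mem_B.1 hr
    simp only [bt, wt, Prod.mk.injEq] at he'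
    rw [← he'.1, D.inj_cs _ _ he'.2.1 he'.2.2]
  · obtain ⟨e', h1, h2⟩ := D.nextS e
    refine ⟨D.cf e', ⟨?_, D.mem_B.2 ⟨e', ?_⟩⟩, ?_⟩
    · intro h
      have := D.inj_cs _ _ h h2
      subst this
      exact D.loopless _ h1
    · simp [bt, wt, h1, h2]
    · rintro c ⟨_, hc⟩
      obtain ⟨e'', he⟩ := D.mem_B.1 hc
      simp only [bt, wt, Prod.mk.injEq] at he
      rw [← he.2.1, D.inj_ss e'' e' (he.1.trans h1.symm) (he.2.2.trans h2.symm)]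
  · obtain ⟨e', h1, h2⟩ := D.nextC e
    refine ⟨D.sf e', ⟨?_, D.mem_B.2 ⟨e', ?_⟩⟩, ?_⟩
    · intro h
      have := D.inj_cs _ _ h2 h
      subst this
      exact D.loopless _ h1
    · simp [bt, wt, h1, h2]
    · rintro c ⟨_, hc⟩
      obtain ⟨e'', he⟩ := D.mem_B.1 hc
      simp only [bt, wt, Prod.mk.injEq] at he
      rw [← he.2.2, D.inj_sc e'' e' (he.1.trans h1.symm) (he.2.1.trans h2.symm)]

theorem closed {W' B' : Finset (R × C × S)} (hB : B' ⊆ D.B) (h : TradeCond W' B') (e : E)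
    (he : D.wt e ∈ W') : D.bt e ∈ B' ∧
      ∀ e', D.tgt e = D.src e' → (D.sf e = D.sf e' ∨ D.cf e = D.cf e') → D.bt e' ∈ B' := by
  obtain ⟨⟨r, ⟨_, hr⟩, _⟩, ⟨c, ⟨_, hc⟩, _⟩, ⟨s, ⟨_, hs⟩, _⟩⟩ := h _ he
  refine ⟨?_, ?_⟩
  · obtain ⟨e', he'⟩ := D.mem_B.1 (hB hr)
    rw [← he'] at hr
    simp only [bt, wt, Prod.mk.injEq] at he'
    rwa [← D.inj_cs e' e he'.2.1 he'.2.2]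
  · rintro e' h1 (h2 | h2)
    · obtain ⟨e'', he'⟩ := D.mem_B.1 (hB hc)
      rw [← he'] at hc
      simp only [bt, wt, Prod.mk.injEq] at he'
      rwa [← D.inj_ss e'' e' (he'.1.trans h1) (he'.2.2.trans h2)]
    · obtain ⟨e'', he'⟩ := D.mem_B.1 (hB hs)
      rw [← he'] at hs
      simp only [bt, wt, Prod.mk.injEq] at he'
      rwa [← D.inj_sc e'' e' (he'.1.trans h1) (he'.2.1.trans h2)]

/-- The spherical bitrade of an arc structure satisfying the Euler count. -/
def bitrade [Fintype R] [Fintype C] [Fintype S] [Nonempty E]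
    (h : Fintype.card R + Fintype.card C + Fintype.card S = Fintype.card E + 2) :
    SphericalLatinBitrade where
  R := R
  C := C
  S := S
  instR := inferInstance
  instC := inferInstance
  instS := inferInstance
  W := D.W
  B := D.B
  W_nonempty := by simp [W]
  B_nonempty := by simp [B]
  W_pls := D.pls
  B_pls := D.rev.pls
  tradeWB := D.trade
  tradeBW := D.rev.trade
  connected := by
    rintro ⟨W', B', hW, hB, ⟨t, ht⟩, _, h1, h2⟩
    have key : ∀ e, D.wt e ∈ W' ↔ D.bt e ∈ B' := fun e =>
      ⟨fun he => (D.closed hB.1 h1 e he).1, fun he => (D.rev.closed hW.1 h2 e he).1⟩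
    have hX := D.conn (fun e => D.wt e ∈ W') (by
      intro e e' ht hf
      refine ⟨fun he => (key e').2 ((D.closed hB.1 h1 e he).2 e' ht hf), fun he => ?_⟩
      exact (D.rev.closed hW.1 h2 e' ((key e').1 he)).2 e ht.symm (hf.imp Eq.symm Eq.symm))
    obtain ⟨e, rfl⟩ := D.mem_W.1 (hW.1 ht)
    apply hW.2
    intro t' ht'
    obtain ⟨e', rfl⟩ := D.mem_W.1 ht'
    exact hX e e' ht
  spherical := by
    rw [W, Finset.card_image_of_injective _ D.wt_inj, Finset.card_univ, ← h]

end ArcData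

/-- The homomorphism from `A_W` given by a function satisfying the relations. -/
def awLift (T : SphericalLatinBitrade) {A : Type*} [AddCommGroup A] (f : T.R ⊕ T.C ⊕ T.S → A)
    (hf : ∀ t ∈ T.W, f (Sum.inl t.1) + f (Sum.inr (Sum.inl t.2.1)) +
      f (Sum.inr (Sum.inr t.2.2)) = 0) : groupAW T →+ A :=
  QuotientAddGroup.lift (bitradeRelations T) (FreeAbelianGroup.lift f) (by
    rw [bitradeRelations, AddSubgroup.closure_le]
    rintro _ ⟨t, ht, rfl⟩
    simpa using hf t ht)

def awGen (T : SphericalLatinBitrade) (x : T.R ⊕ T.C ⊕ T.S) : groupAW T :=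
  QuotientAddGroup.mk (FreeAbelianGroup.of x)

theorem awLift_gen (T : SphericalLatinBitrade) {A : Type*} [AddCommGroup A]
    (f : T.R ⊕ T.C ⊕ T.S → A) (hf) (x) : awLift T f hf (awGen T x) = f x := by
  simp only [awLift, awGen]
  erw [QuotientAddGroup.lift_mk]
  simp

theorem awGen_rel (T : SphericalLatinBitrade) (t) (ht : t ∈ T.W) :
    awGen T (Sum.inl t.1) + awGen T (Sum.inr (Sum.inl t.2.1)) +
      awGen T (Sum.inr (Sum.inr t.2.2)) = 0 := by
  have : ((FreeAbelianGroup.of (Sum.inl t.1) + FreeAbelianGroup.of (Sum.inr (Sum.inl t.2.1)) +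
        FreeAbelianGroup.of (Sum.inr (Sum.inr t.2.2)) :
        FreeAbelianGroup (T.R ⊕ T.C ⊕ T.S)) : groupAW T) = 0 := by
    rw [QuotientAddGroup.eq_zero_iff]
    exact AddSubgroup.subset_closure ⟨t, ht, rfl⟩
  exact this

theorem aw_hom_ext (T : SphericalLatinBitrade) {A : Type*} [AddCommGroup A]
    (f g : groupAW T →+ A) (h : ∀ x, f (awGen T x) = g (awGen T x)) : f = g := by
  apply QuotientAddGroup.addMonoidHom_ext
  apply FreeAbelianGroup.lift_ext
  intro x
  exact h x

theorem canonical_of (T : SphericalLatinBitrade) {H : Type*} [AddCommGroup H] [Finite H]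
    (f : T.R ⊕ T.C ⊕ T.S → (ℤ × ℤ) × H)
    (hf : ∀ t ∈ T.W, f (Sum.inl t.1) + f (Sum.inr (Sum.inl t.2.1)) +
      f (Sum.inr (Sum.inr t.2.2)) = 0)
    (ψ : (ℤ × ℤ) × H →+ groupAW T) (h1 : ∀ x, ψ (f x) = awGen T x)
    (h2 : ∀ z, awLift T f hf (ψ z) = z) : Nonempty (CanonicalGroup T ≃+ H) := by
  have h3 : ∀ a, ψ (awLift T f hf a) = a := by
    have := aw_hom_ext T (ψ.comp (awLift T f hf)) (AddMonoidHom.id _) (by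
      intro x
      simp [awLift_gen, h1])
    intro a
    exact DFunLike.congr_fun this a
  have htor : ∀ h : H, ψ (0, h) ∈ AddCommGroup.torsion (groupAW T) := by
    intro h
    have : IsOfFinAddOrder h := isOfFinAddOrder_of_finite h
    have h' : IsOfFinAddOrder ((AddMonoidHom.inr (ℤ × ℤ) H) h) :=
      AddMonoidHom.isOfFinAddOrder _ this
    exact AddMonoidHom.isOfFinAddOrder ψ h'
  let F : H →+ CanonicalGroup T :=
    (ψ.comp (AddMonoidHom.inr (ℤ × ℤ) H)).codRestrict _ htor
  refine ⟨(AddEquiv.ofBijective F ⟨?_, ?_⟩).symm⟩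
  · intro a b hab
    have h4 : ψ (0, a) = ψ (0, b) := congrArg Subtype.val hab
    have h5 := congrArg (awLift T f hf) h4
    rw [h2, h2] at h5
    exact (Prod.mk.injEq _ _ _ _ ▸ h5).2
  · rintro ⟨a, ha⟩
    have ha' : IsOfFinAddOrder a := ha
    have h4 : IsOfFinAddOrder (awLift T f hf a) := AddMonoidHom.isOfFinAddOrder _ ha'
    obtain ⟨n, hn, hn'⟩ := isOfFinAddOrder_iff_nsmul_eq_zero.1 h4
    have h5 : (awLift T f hf a).1 = 0 := by
      have h6 : n • (awLift T f hf a).1 = 0 := congrArg Prod.fst hn'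
      exact (smul_eq_zero.1 h6).resolve_left hn.ne'
    refine ⟨(awLift T f hf a).2, ?_⟩
    apply Subtype.ext
    change ψ (0, (awLift T f hf a).2) = a
    rw [← h5]
    exact h3 a

/-- The arcs of the main family. -/
abbrev Arc (g k : ℕ) : Type :=
  Fin k ⊕ Fin k ⊕ Fin g ⊕ Fin (g - 1) ⊕ Fin g ⊕ Fin (g - 1)

namespace Arc

variable {g k : ℕ}

def srcN : Arc g k → ℕ
  | .inl i => if i.1 = 0 then k + 1 else i.1
  | .inr (.inl i) => if i.1 = k - 1 then k + 1 else i.1 + 1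
  | .inr (.inr (.inl _)) => 0
  | .inr (.inr (.inr (.inl _))) => k + 1
  | .inr (.inr (.inr (.inr (.inl _)))) => k
  | .inr (.inr (.inr (.inr (.inr _)))) => k + 1

def tgtN : Arc g k → ℕ
  | .inl i => i.1 + 1
  | .inr (.inl i) => i.1
  | .inr (.inr (.inl _)) => k + 1
  | .inr (.inr (.inr (.inl _))) => 0
  | .inr (.inr (.inr (.inr (.inl _)))) => k + 1
  | .inr (.inr (.inr (.inr (.inr _)))) => k

def cfN : Arc g k → ℕ
  | .inl i => g - 1 + i.1
  | .inr (.inl i) => g - 1 + i.1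
  | .inr (.inr (.inl j)) => g - 1 - j.1
  | .inr (.inr (.inr (.inl j))) => g - 2 - j.1
  | .inr (.inr (.inr (.inr (.inl j)))) => 2 * g + k - 3 - j.1
  | .inr (.inr (.inr (.inr (.inr j)))) => 2 * g + k - 3 - j.1

def sfN : Arc g k → ℕ
  | .inl _ => g
  | .inr (.inl _) => g - 1
  | .inr (.inr (.inl j)) => j.1
  | .inr (.inr (.inr (.inl j))) => j.1
  | .inr (.inr (.inr (.inr (.inl j)))) => g + j.1
  | .inr (.inr (.inr (.inr (.inr j)))) => g + j.1 + 1

theorem srcN_lt (e : Arc g k) : srcN e < k + 2 := by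
  rcases e with ⟨i, hi⟩ | ⟨i, hi⟩ | ⟨i, hi⟩ | ⟨i, hi⟩ | ⟨i, hi⟩ | ⟨i, hi⟩ <;>
    simp only [srcN] <;> (try split_ifs) <;> omega

theorem tgtN_lt (e : Arc g k) : tgtN e < k + 2 := by
  rcases e with ⟨i, hi⟩ | ⟨i, hi⟩ | ⟨i, hi⟩ | ⟨i, hi⟩ | ⟨i, hi⟩ | ⟨i, hi⟩ <;>
    simp only [tgtN] <;> omega

theorem cfN_lt (hg : 2 ≤ g) (hk : 2 ≤ k) (e : Arc g k) : cfN e < k + 2 * g - 2 := by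
  rcases e with ⟨i, hi⟩ | ⟨i, hi⟩ | ⟨i, hi⟩ | ⟨i, hi⟩ | ⟨i, hi⟩ | ⟨i, hi⟩ <;>
    simp only [cfN] <;> omega

theorem sfN_lt (hg : 2 ≤ g) (e : Arc g k) : sfN e < 2 * g := by
  rcases e with ⟨i, hi⟩ | ⟨i, hi⟩ | ⟨i, hi⟩ | ⟨i, hi⟩ | ⟨i, hi⟩ | ⟨i, hi⟩ <;>
    simp only [sfN] <;> omega

theorem loopless (hk : 2 ≤ k) (e : Arc g k) : srcN e ≠ tgtN e := by
  rcases e with ⟨i, hi⟩ | ⟨i, hi⟩ | ⟨i, hi⟩ | ⟨i, hi⟩ | ⟨i, hi⟩ | ⟨i, hi⟩ <;>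
    simp only [srcN, tgtN] <;> (try split_ifs) <;> omega

theorem inj_cs (hg : 2 ≤ g) (hk : 2 ≤ k) (e e' : Arc g k) :
    cfN e = cfN e' → sfN e = sfN e' → e = e' := by
  rcases e with ⟨i, hi⟩ | ⟨i, hi⟩ | ⟨i, hi⟩ | ⟨i, hi⟩ | ⟨i, hi⟩ | ⟨i, hi⟩ <;>
  rcases e' with ⟨j, hj⟩ | ⟨j, hj⟩ | ⟨j, hj⟩ | ⟨j, hj⟩ | ⟨j, hj⟩ | ⟨j, hj⟩ <;>
    simp only [cfN, sfN, Sum.inl.injEq, Sum.inr.injEq, Fin.mk.injEq, reduceCtorEq] <;>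
    grind

theorem inj_tc (hg : 2 ≤ g) (hk : 2 ≤ k) (e e' : Arc g k) :
    tgtN e = tgtN e' → cfN e = cfN e' → e = e' := by
  rcases e with ⟨i, hi⟩ | ⟨i, hi⟩ | ⟨i, hi⟩ | ⟨i, hi⟩ | ⟨i, hi⟩ | ⟨i, hi⟩ <;>
  rcases e' with ⟨j, hj⟩ | ⟨j, hj⟩ | ⟨j, hj⟩ | ⟨j, hj⟩ | ⟨j, hj⟩ | ⟨j, hj⟩ <;>
    simp only [cfN, tgtN, Sum.inl.injEq, Sum.inr.injEq, Fin.mk.injEq, reduceCtorEq] <;>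
    grind

theorem inj_ts (hg : 2 ≤ g) (hk : 2 ≤ k) (e e' : Arc g k) :
    tgtN e = tgtN e' → sfN e = sfN e' → e = e' := by
  rcases e with ⟨i, hi⟩ | ⟨i, hi⟩ | ⟨i, hi⟩ | ⟨i, hi⟩ | ⟨i, hi⟩ | ⟨i, hi⟩ <;>
  rcases e' with ⟨j, hj⟩ | ⟨j, hj⟩ | ⟨j, hj⟩ | ⟨j, hj⟩ | ⟨j, hj⟩ | ⟨j, hj⟩ <;>
    simp only [sfN, tgtN, Sum.inl.injEq, Sum.inr.injEq, Fin.mk.injEq, reduceCtorEq] <;>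
    grind

theorem inj_sc (hg : 2 ≤ g) (hk : 2 ≤ k) (e e' : Arc g k) :
    srcN e = srcN e' → cfN e = cfN e' → e = e' := by
  rcases e with ⟨i, hi⟩ | ⟨i, hi⟩ | ⟨i, hi⟩ | ⟨i, hi⟩ | ⟨i, hi⟩ | ⟨i, hi⟩ <;>
  rcases e' with ⟨j, hj⟩ | ⟨j, hj⟩ | ⟨j, hj⟩ | ⟨j, hj⟩ | ⟨j, hj⟩ | ⟨j, hj⟩ <;>
    simp only [cfN, srcN, Sum.inl.injEq, Sum.inr.injEq, Fin.mk.injEq, reduceCtorEq] <;>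
    grind

theorem inj_ss (hg : 2 ≤ g) (hk : 2 ≤ k) (e e' : Arc g k) :
    srcN e = srcN e' → sfN e = sfN e' → e = e' := by
  rcases e with ⟨i, hi⟩ | ⟨i, hi⟩ | ⟨i, hi⟩ | ⟨i, hi⟩ | ⟨i, hi⟩ | ⟨i, hi⟩ <;>
  rcases e' with ⟨j, hj⟩ | ⟨j, hj⟩ | ⟨j, hj⟩ | ⟨j, hj⟩ | ⟨j, hj⟩ | ⟨j, hj⟩ <;>
    simp only [sfN, srcN, Sum.inl.injEq, Sum.inr.injEq, Fin.mk.injEq, reduceCtorEq] <;>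
    grind

def e1 (i : ℕ) (h : i < k) : Arc g k := .inl ⟨i, h⟩
def e2 (i : ℕ) (h : i < k) : Arc g k := .inr (.inl ⟨i, h⟩)
def e3 (i : ℕ) (h : i < g) : Arc g k := .inr (.inr (.inl ⟨i, h⟩))
def e4 (i : ℕ) (h : i < g - 1) : Arc g k := .inr (.inr (.inr (.inl ⟨i, h⟩)))
def e5 (i : ℕ) (h : i < g) : Arc g k := .inr (.inr (.inr (.inr (.inl ⟨i, h⟩))))
def e6 (i : ℕ) (h : i < g - 1) : Arc g k := .inr (.inr (.inr (.inr (.inr ⟨i, h⟩))))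

theorem nextC (hg : 2 ≤ g) (hk : 2 ≤ k) (e : Arc g k) :
    ∃ e' : Arc g k, srcN e' = tgtN e ∧ cfN e' = cfN e := by
  rcases e with ⟨i, hi⟩ | ⟨i, hi⟩ | ⟨i, hi⟩ | ⟨i, hi⟩ | ⟨i, hi⟩ | ⟨i, hi⟩
  · by_cases h : i = k - 1
    · exact ⟨e5 (g - 1) (by omega), by simp only [e5, srcN, tgtN, cfN]; grind⟩
    · exact ⟨e2 i hi, by simp only [e2, srcN, tgtN, cfN, if_neg h, and_self]⟩
  · by_cases h : i = 0
    · exact ⟨e3 0 (by omega), by simp only [e3, srcN, tgtN, cfN]; grind⟩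
    · exact ⟨e1 i hi, by simp only [e1, srcN, tgtN, cfN, if_neg h, and_self]⟩
  · by_cases h : i = 0
    · exact ⟨e1 0 (by omega), by simp only [e1, srcN, tgtN, cfN, if_true]; grind⟩
    · exact ⟨e4 (i - 1) (by omega), by simp only [e4, srcN, tgtN, cfN]; grind⟩
  · exact ⟨e3 (i + 1) (by omega), by simp only [e3, srcN, tgtN, cfN]; grind⟩
  · by_cases h : i = g - 1
    · exact ⟨e2 (k - 1) (by omega), by simp only [e2, srcN, tgtN, cfN, if_true]; grind⟩
    · exact ⟨e6 i (by omega), by simp only [e6, srcN, tgtN, cfN]; grind⟩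
  · exact ⟨e5 i (by omega), by simp only [e5, srcN, tgtN, cfN]; grind⟩

theorem nextS (hg : 2 ≤ g) (hk : 2 ≤ k) (e : Arc g k) :
    ∃ e' : Arc g k, srcN e' = tgtN e ∧ sfN e' = sfN e := by
  rcases e with ⟨i, hi⟩ | ⟨i, hi⟩ | ⟨i, hi⟩ | ⟨i, hi⟩ | ⟨i, hi⟩ | ⟨i, hi⟩
  · by_cases h : i = k - 1
    · exact ⟨e5 0 (by omega), by simp only [e5, srcN, tgtN, sfN]; grind⟩
    · exact ⟨e1 (i + 1) (by omega), by simp only [e1, srcN, tgtN, sfN]; grind⟩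
  · by_cases h : i = 0
    · exact ⟨e3 (g - 1) (by omega), by simp only [e3, srcN, tgtN, sfN]; grind⟩
    · exact ⟨e2 (i - 1) (by omega), by simp only [e2, srcN, tgtN, sfN]; grind⟩
  · by_cases h : i = g - 1
    · exact ⟨e2 (k - 1) (by omega), by simp only [e2, srcN, tgtN, sfN, if_true]; grind⟩
    · exact ⟨e4 i (by omega), by simp only [e4, srcN, tgtN, sfN]; grind⟩
  · exact ⟨e3 i (by omega), by simp only [e3, srcN, tgtN, sfN]; grind⟩
  · by_cases h : i = 0
    · exact ⟨e1 0 (by omega), by simp only [e1, srcN, tgtN, sfN, if_true]; grind⟩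
    · exact ⟨e6 (i - 1) (by omega), by simp only [e6, srcN, tgtN, sfN]; grind⟩
  · exact ⟨e5 (i + 1) (by omega), by simp only [e5, srcN, tgtN, sfN]; grind⟩

theorem occR (hg : 2 ≤ g) (hk : 2 ≤ k) (r : ℕ) (hr : r < k + 2) :
    ∃ e : Arc g k, tgtN e = r := by
  by_cases h : r = k + 1
  · exact ⟨e3 0 (by omega), by simp only [e3, tgtN]; omega⟩
  · by_cases h0 : r = 0
    · exact ⟨e2 0 (by omega), by simp only [e2, tgtN]; omega⟩
    · exact ⟨e1 (r - 1) (by omega), by simp only [e1, tgtN]; omega⟩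

theorem occC (hg : 2 ≤ g) (hk : 2 ≤ k) (c : ℕ) (hc : c < k + 2 * g - 2) :
    ∃ e : Arc g k, cfN e = c := by
  by_cases h : c < g
  · exact ⟨e3 (g - 1 - c) (by omega), by simp only [e3, cfN]; omega⟩
  · by_cases h0 : c < g - 1 + k
    · exact ⟨e1 (c - (g - 1)) (by omega), by simp only [e1, cfN]; omega⟩
    · exact ⟨e5 (2 * g + k - 3 - c) (by omega), by simp only [e5, cfN]; omega⟩

theorem occS (s : ℕ) (hs : s < 2 * g) : ∃ e : Arc g k, sfN e = s := by
  by_cases h : s < g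
  · exact ⟨e3 s h, by simp only [e3, sfN]⟩
  · exact ⟨e5 (s - g) (by omega), by simp only [e5, sfN]; omega⟩

theorem conn (hg : 2 ≤ g) (hk : 2 ≤ k) (X : Arc g k → Prop)
    (hX : ∀ e e', tgtN e = srcN e' → (sfN e = sfN e' ∨ cfN e = cfN e') → (X e ↔ X e'))
    (e e' : Arc g k) : X e → X e' := by
  have h1 : ∀ i (h : i < k), X (e1 i h) ↔ X (e1 0 (by omega)) := by
    intro i
    induction i with
    | zero => intro h; rfl
    | succ i ih =>
      intro h
      rw [← ih (by omega)]
      exact (hX _ _ (by simp only [e1, srcN, tgtN]; grind)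
        (by simp only [e1, sfN, cfN]; grind)).symm
  have h2 : ∀ i (h : i < k), X (e2 i h) ↔ X (e2 0 (by omega)) := by
    intro i
    induction i with
    | zero => intro h; rfl
    | succ i ih =>
      intro h
      rw [← ih (by omega)]
      exact (hX _ _ (by simp only [e2, srcN, tgtN]; grind)
        (by simp only [e2, sfN, cfN]; grind))
  have h34 : ∀ i (h : i < g - 1), X (e4 i h) ↔ X (e3 i (by omega)) := fun i h =>
    hX _ _ (by simp only [e3, e4, srcN, tgtN]) (by simp only [e3, e4, sfN, cfN]; grind)
  have h56 : ∀ i (h : i < g - 1), X (e6 i h) ↔ X (e5 i (by omega)) := fun i h =>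
    hX _ _ (by simp only [e5, e6, srcN, tgtN]) (by simp only [e5, e6, sfN, cfN]; grind)
  have h3 : ∀ i (h : i < g), X (e3 i h) ↔ X (e3 0 (by omega)) := by
    intro i
    induction i with
    | zero => intro h; rfl
    | succ i ih =>
      intro h
      rw [← ih (by omega), ← h34 i (by omega)]
      exact (hX _ _ (by simp only [e3, e4, srcN, tgtN])
        (by simp only [e3, e4, sfN, cfN]; grind)).symm
  have h5 : ∀ i (h : i < g), X (e5 i h) ↔ X (e5 0 (by omega)) := by
    intro i
    induction i with
    | zero => intro h; rfl
    | succ i ih =>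
      intro h
      rw [← ih (by omega), ← h56 i (by omega)]
      exact (hX _ _ (by simp only [e5, e6, srcN, tgtN])
        (by simp only [e5, e6, sfN, cfN]; grind)).symm
  have h12 : X (e1 0 (by omega)) ↔ X (e2 0 (by omega)) :=
    hX _ _ (by simp only [e1, e2, srcN, tgtN]; grind)
      (by simp only [e1, e2, sfN, cfN]; grind)
  have h15 : X (e1 (k - 1) (by omega)) ↔ X (e5 0 (by omega)) :=
    hX _ _ (by simp only [e1, e5, srcN, tgtN]; grind)
      (by simp only [e1, e5, sfN, cfN]; grind)
  have h23 : X (e2 0 (by omega)) ↔ X (e3 (g - 1) (by omega)) :=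
    hX _ _ (by simp only [e2, e3, srcN, tgtN])
      (by simp only [e2, e3, sfN, cfN]; grind)
  have all : ∀ e, X e ↔ X (e1 0 (by omega)) := by
    rw [h1] at h15
    rw [h3] at h23
    rintro (⟨i, hi⟩ | ⟨i, hi⟩ | ⟨i, hi⟩ | ⟨i, hi⟩ | ⟨i, hi⟩ | ⟨i, hi⟩)
    · exact h1 i hi
    · exact (h2 i hi).trans h12.symm
    · exact (h3 i hi).trans (h23.symm.trans h12.symm)
    · exact (h34 i hi).trans ((h3 i _).trans (h23.symm.trans h12.symm))
    · exact (h5 i hi).trans h15.symm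
    · exact (h56 i hi).trans ((h5 i _).trans h15.symm)
  exact fun h => (all e').2 ((all e).1 h)

def data (hg : 2 ≤ g) (hk : 2 ≤ k) :
    ArcData (Arc g k) (Fin (k + 2)) (Fin (k + 2 * g - 2)) (Fin (2 * g)) where
  src e := ⟨srcN e, srcN_lt e⟩
  tgt e := ⟨tgtN e, tgtN_lt e⟩
  cf e := ⟨cfN e, cfN_lt hg hk e⟩
  sf e := ⟨sfN e, sfN_lt hg e⟩
  loopless e h := loopless hk e (congrArg Fin.val h)
  inj_cs e e' h h' := inj_cs hg hk e e' (congrArg Fin.val h) (congrArg Fin.val h')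
  inj_tc e e' h h' := inj_tc hg hk e e' (congrArg Fin.val h) (congrArg Fin.val h')
  inj_ts e e' h h' := inj_ts hg hk e e' (congrArg Fin.val h) (congrArg Fin.val h')
  inj_sc e e' h h' := inj_sc hg hk e e' (congrArg Fin.val h) (congrArg Fin.val h')
  inj_ss e e' h h' := inj_ss hg hk e e' (congrArg Fin.val h) (congrArg Fin.val h')
  nextC e := (nextC hg hk e).imp fun _ h => ⟨Fin.ext h.1, Fin.ext h.2⟩
  nextS e := (nextS hg hk e).imp fun _ h => ⟨Fin.ext h.1, Fin.ext h.2⟩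
  occR r := (occR hg hk r.1 r.2).imp fun _ h => Fin.ext h
  occC c := (occC hg hk c.1 c.2).imp fun _ h => Fin.ext h
  occS s := (occS s.1 s.2).imp fun _ h => Fin.ext h
  conn X hX := conn hg hk X fun e e' h h' => hX e e' (Fin.ext h) (h'.imp Fin.ext Fin.ext)

theorem euler (hg : 2 ≤ g) (hk : 2 ≤ k) :
    Fintype.card (Fin (k + 2)) + Fintype.card (Fin (k + 2 * g - 2)) + Fintype.card (Fin (2 * g))
      = Fintype.card (Arc g k) + 2 := by
  simp only [Fintype.card_fin, Fintype.card_sum]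
  omega

def bitrade (hg : 2 ≤ g) (hk : 2 ≤ k) : SphericalLatinBitrade :=
  haveI : Nonempty (Arc g k) := ⟨e1 0 (by omega)⟩
  (data hg hk).bitrade (euler hg hk)

end Arc

section algebra

variable {A : Type*} [AddCommGroup A]

def rowVal (k : ℕ) (u x d : A) (i : ℕ) : A := if i = k + 1 then u else u + x + i • d

def colVal (g k : ℕ) (v x d : A) (c : ℕ) : A :=
  if c < g then v - (g - 1 - c) • x
  else if c < g + k - 1 then v - (c - (g - 1)) • d
  else v + d + (2 * g + k - 2 - c) • x + ((2 * g + k - 3 - c) * k) • d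

def symVal (g k : ℕ) (u v x d : A) (s : ℕ) : A :=
  if s < g then -u - v + s • x else -u - v - x - d - (s - g) • (x + k • d)

theorem val_rel {g k : ℕ} (hg : 2 ≤ g) (hk : 2 ≤ k) (u v x d : A) (hx : g • x = 0)
    (hd : (g * k) • d = 0) (e : Arc g k) :
    rowVal k u x d e.tgtN + colVal g k v x d e.cfN + symVal g k u v x d e.sfN = 0 := by
  obtain ⟨h, rfl⟩ : ∃ h, g = h + 1 := ⟨g - 1, by omega⟩
  obtain ⟨l, rfl⟩ : ∃ l, k = l + 1 := ⟨k - 1, by omega⟩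
  have hx' : x = - (h • x) := by rw [eq_neg_iff_add_eq_zero, ← hx]; module
  have K : ∀ i < l + 1, colVal (h + 1) (l + 1) v x d (h + i) = v - i • d := by
    intro i hi
    unfold colVal
    split_ifs with h1 h2
    · obtain rfl : i = 0 := by omega
      simp
    · congr 2; omega
    · omega
  have F : symVal (h + 1) (l + 1) u v x d (h + 1) = -u - v - x - d := by simp [symVal]
  have G : symVal (h + 1) (l + 1) u v x d h = -u - v - x := by
    simp only [symVal, Nat.lt_succ_self, if_true]
    nth_rw 2 [hx']
    abel
  have D : ∀ i < h + 1, symVal (h + 1) (l + 1) u v x d i = -u - v + i • x := by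
    intro i hi
    simp only [symVal, hi, if_true]
  have L : ∀ i < h + 1, colVal (h + 1) (l + 1) v x d (h - i) = v - i • x := by
    intro i hi
    unfold colVal
    rw [if_pos (by omega)]
    congr 2; omega
  have M : ∀ i < h + 1, colVal (h + 1) (l + 1) v x d (2 * h + l - i)
      = v + d + (i + 1) • x + (i * (l + 1)) • d := by
    intro i hi
    by_cases h1 : i = h
    · subst h1
      rw [show 2 * i + l - i = i + l by omega, K l (by omega)]
      have : v + d + (i + 1) • x + (i * (l + 1)) • d
        = v + (i + 1) • x + ((i + 1) * (l + 1)) • d - l • d := by module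
      rw [this, hx, hd]
      abel
    · unfold colVal
      rw [if_neg (by omega), if_neg (by omega)]
      congr 3
      · omega
      · omega
  have N : ∀ i < h + 1, symVal (h + 1) (l + 1) u v x d (h + 1 + i)
      = -u - v - x - d - i • (x + (l + 1) • d) := by
    intro i hi
    unfold symVal
    rw [if_neg (by omega)]
    congr 2; omega
  have R : ∀ i < l + 2, rowVal (l + 1) u x d i = u + x + i • d := by
    intro i hi
    rw [rowVal, if_neg (by omega)]
  have Z : rowVal (l + 1) u x d (l + 1 + 1) = u := by simp [rowVal]
  rcases e with ⟨i, hi⟩ | ⟨i, hi⟩ | ⟨i, hi⟩ | ⟨i, hi⟩ | ⟨i, hi⟩ | ⟨i, hi⟩ <;>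
    simp only [Arc.tgtN, Arc.cfN, Arc.sfN, Nat.add_sub_cancel]
  · rw [R _ (by omega), K i hi, F]; module
  · rw [R _ (by omega), K i hi, G]; module
  · rw [Z, L i hi, D i hi]; module
  · rw [R _ (by omega), show h + 1 - 2 - i = h - (i + 1) by omega, L _ (by omega), D i (by omega)]
    module
  · rw [Z, show 2 * (h + 1) + (l + 1) - 3 - i = 2 * h + l - i by omega, M i hi, N i hi]
    module
  · rw [R _ (by omega), show 2 * (h + 1) + (l + 1) - 3 - i = 2 * h + l - i by omega,
      M i (by omega), show h + 1 + i + 1 = h + 1 + (i + 1) by omega, N _ (by omega)]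
    module

theorem val_unique {g k : ℕ} (hg : 2 ≤ g) (hk : 2 ≤ k) (fr fc fs : ℕ → A)
    (H : ∀ e : Arc g k, fr e.tgtN + fc e.cfN + fs e.sfN = 0)
    (u v x d : A) (hu : u = fr (k + 1)) (hv : v = fc (g - 1)) (hxx : x = fr 0 - fr (k + 1))
    (hdd : d = fr 1 - fr 0) :
    g • x = 0 ∧ (g * k) • d = 0 ∧ (∀ i < k + 2, fr i = rowVal k u x d i) ∧
    (∀ i < k + 2 * g - 2, fc i = colVal g k v x d i) ∧
    (∀ i < 2 * g, fs i = symVal g k u v x d i) := by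
  obtain ⟨h, rfl⟩ : ∃ h, g = h + 1 := ⟨g - 1, by omega⟩
  obtain ⟨l, rfl⟩ : ∃ l, k = l + 1 := ⟨k - 1, by omega⟩
  have H1 : ∀ i < l + 1, fr (i + 1) + fc (h + i) + fs (h + 1) = 0 := fun i hi => H (Arc.e1 i hi)
  have H2 : ∀ i < l + 1, fr i + fc (h + i) + fs h = 0 := fun i hi => H (Arc.e2 i hi)
  have H3 : ∀ i < h + 1, fr (l + 2) + fc (h - i) + fs i = 0 := fun i hi => H (Arc.e3 i hi)
  have H4 : ∀ i < h, fr 0 + fc (h - (i + 1)) + fs i = 0 := fun i hi => by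
    have := H (Arc.e4 i hi)
    simp only [Arc.e4, Arc.tgtN, Arc.cfN, Arc.sfN] at this
    rwa [show h + 1 - 2 - i = h - (i + 1) by omega] at this
  have H5 : ∀ i < h + 1, fr (l + 2) + fc (2 * h + l - i) + fs (h + 1 + i) = 0 := fun i hi => by
    have := H (Arc.e5 i hi)
    simp only [Arc.e5, Arc.tgtN, Arc.cfN, Arc.sfN] at this
    rwa [show 2 * (h + 1) + (l + 1) - 3 - i = 2 * h + l - i by omega] at this
  have H6 : ∀ i < h, fr (l + 1) + fc (2 * h + l - i) + fs (h + 1 + (i + 1)) = 0 := fun i hi => by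
    have := H (Arc.e6 i hi)
    simp only [Arc.e6, Arc.tgtN, Arc.cfN, Arc.sfN] at this
    rwa [show 2 * (h + 1) + (l + 1) - 3 - i = 2 * h + l - i by omega] at this
  simp only [Nat.add_sub_cancel] at hv
  have hu' : fr (l + 2) = u := hu.symm
  have hr0 : fr 0 = u + x := by rw [hu, hxx]; abel
  have hr1 : fr 1 = u + x + d := by rw [hu, hxx, hdd]; abel
  have hG : fs h = - u - v - x := by
    have := H2 0 (by omega)
    rw [add_zero, hr0, ← hv] at this
    rw [← sub_eq_zero, ← this]; abel
  have hF : fs (h + 1) = - u - v - x - d := by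
    have := H1 0 (by omega)
    rw [add_zero, zero_add, hr1, ← hv] at this
    rw [← sub_eq_zero, ← this]; abel
  have hR : ∀ i < l + 2, fr i = u + x + i • d := by
    intro i
    induction i with
    | zero => intro _; rw [hr0]; simp
    | succ i ih =>
      intro hi
      have a := H1 i (by omega)
      have b := H2 i (by omega)
      rw [hF] at a
      rw [hG, ih (by omega)] at b
      have : fr (i + 1) = u + x + i • d + d := by
        rw [← sub_eq_zero, ← sub_eq_zero.2 (a.trans b.symm)]; abel
      rw [this]; module
  have hK : ∀ i < l + 1, fc (h + i) = v - i • d := by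
    intro i hi
    have b := H2 i hi
    rw [hR i (by omega), hG] at b
    rw [← sub_eq_zero, ← b]; abel
  have hLD : ∀ i < h + 1, fc (h - i) = v - i • x ∧ fs i = -u - v + i • x := by
    intro i
    induction i with
    | zero =>
      intro hi
      have a := H3 0 hi
      simp only [Nat.sub_zero, ← hv, hu'] at a ⊢
      refine ⟨by simp, ?_⟩
      rw [← sub_eq_zero, ← a]; simp only [zero_smul]; abel
    | succ i ih =>
      intro hi
      have a := H4 i (by omega)
      have b := H3 (i + 1) hi
      rw [(ih (by omega)).2, hr0] at a
      have c : fc (h - (i + 1)) = v - (i + 1) • x := by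
        rw [← sub_eq_zero, ← a]; module
      refine ⟨c, ?_⟩
      rw [c, hu'] at b
      rw [← sub_eq_zero, ← b]; module
  have hx : (h + 1) • x = 0 := by
    have := (hLD h (by omega)).2
    rw [hG] at this
    rw [← sub_eq_zero.2 this.symm]; module
  have hMN : ∀ i < h + 1, fc (2 * h + l - i) = v + d + (i + 1) • x + (i * (l + 1)) • d ∧
      fs (h + 1 + i) = -u - v - x - d - i • (x + (l + 1) • d) := by
    intro i
    induction i with
    | zero =>
      intro hi
      have a := H5 0 hi
      rw [add_zero, hF, hu'] at a
      refine ⟨?_, ?_⟩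
      · rw [← sub_eq_zero, ← a]; module
      · rw [add_zero, hF]; module
    | succ i ih =>
      intro hi
      have a := H6 i (by omega)
      have b := H5 (i + 1) hi
      rw [(ih (by omega)).1, hR _ (by omega)] at a
      have c : fs (h + 1 + (i + 1)) = -u - v - x - d - (i + 1) • (x + (l + 1) • d) := by
        rw [← sub_eq_zero, ← a]; module
      refine ⟨?_, c⟩
      rw [c, hu'] at b
      rw [← sub_eq_zero, ← b]; module
  have hd : ((h + 1) * (l + 1)) • d = 0 := by
    have a := (hMN h (by omega)).1
    rw [show 2 * h + l - h = h + l by omega, hK l (by omega), hx] at a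
    rw [← sub_eq_zero.2 a.symm]; module
  refine ⟨hx, hd, ?_, ?_, ?_⟩
  · intro i hi
    unfold rowVal
    split_ifs with h1
    · rw [h1, hu]
    · exact hR i (by omega)
  · intro i hi
    unfold colVal
    split_ifs with h1 h2
    · have := (hLD (h - i) (by omega)).1
      rw [show h - (h - i) = i by omega] at this
      rw [this]; congr 2
    · have := hK (i - h) (by omega)
      rw [show h + (i - h) = i by omega] at this
      rw [this]; congr 2
    · have := (hMN (2 * h + l - i) (by omega)).1
      rw [show 2 * h + l - (2 * h + l - i) = i by omega] at this
      rw [this, show 2 * (h + 1) + (l + 1) - 2 - i = 2 * h + l - i + 1 by omega,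
        show 2 * (h + 1) + (l + 1) - 3 - i = 2 * h + l - i by omega]
  · intro i hi
    unfold symVal
    split_ifs with h1
    · exact (hLD i h1).2
    · have := (hMN (i - (h + 1)) (by omega)).2
      rwa [show h + 1 + (i - (h + 1)) = i by omega] at this

end algebra

/-- Homomorphism out of `ZMod n` given by an element killed by `n`. -/
def zmodHom {A : Type*} [AddCommGroup A] (n : ℕ) (x : A) (hx : n • x = 0) : ZMod n →+ A :=
  ZMod.lift n ⟨zmultiplesHom A x, by simpa using hx⟩

theorem zmodHom_one {A : Type*} [AddCommGroup A] (n : ℕ) (x : A) (hx : n • x = 0) :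
    zmodHom n x hx 1 = x := by
  have := ZMod.lift_coe n ⟨zmultiplesHom A x, by simpa using hx⟩ 1
  simpa [zmodHom] using this

theorem ArcData.canonical {E R C S : Type} (D : ArcData E R C S) [Fintype E] [DecidableEq R]
    [DecidableEq C] [DecidableEq S] [Fintype R] [Fintype C] [Fintype S] [Nonempty E]
    (h : Fintype.card R + Fintype.card C + Fintype.card S = Fintype.card E + 2)
    {H : Type} [AddCommGroup H] [Finite H] (f : R ⊕ C ⊕ S → (ℤ × ℤ) × H)
    (hf : ∀ e, f (.inl (D.tgt e)) + f (.inr (.inl (D.cf e))) + f (.inr (.inr (D.sf e))) = 0)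
    (hψ : ∀ (A : Type) [AddCommGroup A] (G : R ⊕ C ⊕ S → A),
      (∀ e, G (.inl (D.tgt e)) + G (.inr (.inl (D.cf e))) + G (.inr (.inr (D.sf e))) = 0) →
      ∃ ψ : (ℤ × ℤ) × H →+ A, (∀ t, ψ (f t) = G t) ∧
        ∀ φ : A →+ (ℤ × ℤ) × H, (∀ t, φ (G t) = f t) → ∀ z, φ (ψ z) = z) :
    Nonempty (CanonicalGroup (D.bitrade h) ≃+ H) := by
  have hf' : ∀ t ∈ (D.bitrade h).W, f (Sum.inl t.1) + f (Sum.inr (Sum.inl t.2.1)) +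
      f (Sum.inr (Sum.inr t.2.2)) = 0 := by
    intro t ht
    obtain ⟨e, rfl⟩ := D.mem_W.1 ht
    exact hf e
  obtain ⟨ψ, h1, h2⟩ := hψ (groupAW (D.bitrade h)) (awGen (D.bitrade h))
    (fun e => awGen_rel (D.bitrade h) (D.wt e) (D.mem_W.2 ⟨e, rfl⟩))
  exact canonical_of (D.bitrade h) f hf' ψ h1
    (h2 (awLift (D.bitrade h) f hf') (fun t => awLift_gen (D.bitrade h) f hf' t))

def genVal (g k : ℕ) {A : Type*} [AddCommGroup A] (u v x d : A) :
    Fin (k + 2) ⊕ Fin (k + 2 * g - 2) ⊕ Fin (2 * g) → A :=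
  Sum.elim (fun r => rowVal k u x d r.1)
    (Sum.elim (fun c => colVal g k v x d c.1) (fun s => symVal g k u v x d s.1))

theorem map_genVal (g k : ℕ) {A A' : Type*} [AddCommGroup A] [AddCommGroup A'] (φ : A →+ A')
    (u v x d : A) (t) : φ (genVal g k u v x d t) = genVal g k (φ u) (φ v) (φ x) (φ d) t := by
  rcases t with r | c | s
  · simp only [genVal, Sum.elim_inl, rowVal]
    split_ifs <;> simp
  · simp only [genVal, Sum.elim_inl, Sum.elim_inr, colVal]
    split_ifs <;> simp
  · simp only [genVal, Sum.elim_inr, symVal]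
    split_ifs <;> simp

theorem canonical_main {g k : ℕ} (hg : 2 ≤ g) (hk : 2 ≤ k) :
    Nonempty (CanonicalGroup (Arc.bitrade hg hk) ≃+ (ZMod g × ZMod (g * k))) := by
  have : NeZero g := ⟨by omega⟩
  have : NeZero (g * k) := ⟨by positivity⟩
  have : Nonempty (Arc g k) := ⟨Arc.e1 0 (by omega)⟩
  let u' : (ℤ × ℤ) × (ZMod g × ZMod (g * k)) := ((1, 0), (0, 0))
  let v' : (ℤ × ℤ) × (ZMod g × ZMod (g * k)) := ((0, 1), (0, 0))
  let x' : (ℤ × ℤ) × (ZMod g × ZMod (g * k)) := ((0, 0), (1, 0))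
  let d' : (ℤ × ℤ) × (ZMod g × ZMod (g * k)) := ((0, 0), (0, 1))
  have hx' : g • x' = 0 := by simp [x']
  have hd' : (g * k) • d' = 0 := by
    have : ((g * k : ℕ) : ZMod (g * k)) = 0 := ZMod.natCast_self _
    simp only [d', Prod.smul_mk, smul_zero, nsmul_eq_mul, mul_one, this]
    rfl
  refine (Arc.data hg hk).canonical (Arc.euler hg hk) (genVal g k u' v' x' d')
    (fun e => val_rel hg hk u' v' x' d' hx' hd' e) ?_
  intro A _ G hrelG
  let fr : ℕ → A := fun i => if h : i < k + 2 then G (Sum.inl ⟨i, h⟩) else 0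
  let fc : ℕ → A :=
    fun i => if h : i < k + 2 * g - 2 then G (Sum.inr (Sum.inl ⟨i, h⟩)) else 0
  let fs : ℕ → A :=
    fun i => if h : i < 2 * g then G (Sum.inr (Sum.inr ⟨i, h⟩)) else 0
  have hrel : ∀ e : Arc g k, fr e.tgtN + fc e.cfN + fs e.sfN = 0 := by
    intro e
    simp only [fr, fc, fs, dif_pos e.tgtN_lt, dif_pos (e.cfN_lt hg hk), dif_pos (e.sfN_lt hg)]
    exact hrelG e
  obtain ⟨hx, hd, h1, h2, h3⟩ := val_unique hg hk fr fc fs hrel _ _ _ _ rfl rfl rfl rfl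
  set u := fr (k + 1)
  set v := fc (g - 1)
  set x := fr 0 - u
  set d := fr 1 - fr 0
  have hG : ∀ t, G t = genVal g k u v x d t := by
    rintro (⟨i, hi⟩ | ⟨i, hi⟩ | ⟨i, hi⟩)
    · have := h1 i hi
      simp only [fr, dif_pos hi] at this
      exact this
    · have := h2 i hi
      simp only [fc, dif_pos hi] at this
      exact this
    · have := h3 i hi
      simp only [fs, dif_pos hi] at this
      exact this
  let ψ : (ℤ × ℤ) × (ZMod g × ZMod (g * k)) →+ A :=
    ((zmultiplesHom _ u).coprod (zmultiplesHom _ v)).coprod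
      ((zmodHom g x hx).coprod (zmodHom (g * k) d hd))
  have hu : ψ u' = u := by simp [ψ, u']
  have hv : ψ v' = v := by simp [ψ, v']
  have hxx : ψ x' = x := by simp [ψ, x', zmodHom_one]
  have hdd : ψ d' = d := by simp [ψ, d', zmodHom_one]
  refine ⟨ψ, ?_, ?_⟩
  · intro t
    rw [map_genVal, hu, hv, hxx, hdd]
    exact (hG t).symm
  · intro φ hφ
    have eu : φ u = u' := by
      simp only [u, fr, dif_pos (show k + 1 < k + 2 by omega), hφ]
      simp [genVal, rowVal]
    have ev : φ v = v' := by
      simp only [v, fc, dif_pos (show g - 1 < k + 2 * g - 2 by omega), hφ]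
      simp [genVal, colVal, show 0 < g by omega]
    have ex : φ x = x' := by
      simp only [x, map_sub, eu, fr, dif_pos (show 0 < k + 2 by omega), hφ]
      simp [genVal, rowVal]
    have ed : φ d = d' := by
      simp only [d, map_sub, fr, dif_pos (show 0 < k + 2 by omega),
        dif_pos (show 1 < k + 2 by omega), hφ]
      simp [genVal, rowVal, show k ≠ 0 by omega]
    have key : (φ).comp ψ = AddMonoidHom.id _ := by
      apply AddMonoidHom.ext
      rintro ⟨⟨a, b⟩, ⟨y, z⟩⟩
      obtain ⟨y, rfl⟩ := ZMod.intCast_surjective y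
      obtain ⟨z, rfl⟩ := ZMod.intCast_surjective z
      have hh : (((a, b), ((y : ZMod g), (z : ZMod (g * k)))) :
          (ℤ × ℤ) × (ZMod g × ZMod (g * k))) = a • u' + b • v' + y • x' + z • d' := by
        simp [u', v', x', d']
      rw [hh]
      simp only [map_add, map_zsmul, AddMonoidHom.comp_apply, hu, hv, hxx, hdd, eu, ev, ex, ed,
        AddMonoidHom.id_apply]
    intro z
    exact DFunLike.congr_fun key z

/-- The cycle of length `N`. -/
def cycData (N : ℕ) [NeZero N] (hN : 2 ≤ N) :
    ArcData (ZMod N × Bool) (ZMod N) (ZMod N) Bool where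
  src e := if e.2 then e.1 else e.1 + 1
  tgt e := if e.2 then e.1 + 1 else e.1
  cf e := e.1
  sf e := e.2
  loopless := by
    have : Fact (1 < N) := ⟨by omega⟩
    rintro ⟨i, _ | _⟩ <;> simp
  inj_cs := by
    rintro ⟨i, a⟩ ⟨j, b⟩ h h'
    exact Prod.ext h h'
  inj_tc := by
    have : Fact (1 < N) := ⟨by omega⟩
    rintro ⟨i, _ | _⟩ ⟨j, _ | _⟩ <;> simp <;> rintro h rfl <;> simp at h
  inj_ts := by
    rintro ⟨i, _ | _⟩ ⟨j, _ | _⟩ <;> simp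
  inj_sc := by
    have : Fact (1 < N) := ⟨by omega⟩
    rintro ⟨i, _ | _⟩ ⟨j, _ | _⟩ <;> simp <;> rintro h rfl <;> simp at h
  inj_ss := by
    rintro ⟨i, _ | _⟩ ⟨j, _ | _⟩ <;> simp
  nextC := by
    rintro ⟨i, b⟩
    refine ⟨⟨i, !b⟩, ?_⟩
    cases b <;> simp
  nextS := by
    rintro ⟨i, _ | _⟩
    · exact ⟨⟨i - 1, false⟩, by simp⟩
    · exact ⟨⟨i + 1, true⟩, by simp⟩
  occR r := ⟨⟨r, false⟩, by simp⟩
  occC r := ⟨⟨r, false⟩, rfl⟩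
  occS r := ⟨⟨0, r⟩, rfl⟩
  conn X hX := by
    have h1 : ∀ i, X (i, true) ↔ X (i, false) := fun i => hX _ _ (by simp) (by simp)
    have h2 : ∀ i, X (i, true) ↔ X (i + 1, true) := fun i => hX _ _ (by simp) (by simp)
    have h3 : ∀ n : ℕ, X ((n : ZMod N), true) ↔ X (0, true) := by
      intro n
      induction n with
      | zero => simp
      | succ n ih => rw [← ih, Nat.cast_succ, ← h2]
    have all : ∀ e, X e ↔ X (0, true) := by
      rintro ⟨i, b⟩
      obtain ⟨n, rfl⟩ := ZMod.natCast_zmod_surjective i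
      cases b
      · rw [← h1, h3]
      · exact h3 n
    exact fun e e' h => (all e').2 ((all e).1 h)

theorem cyc_euler (N : ℕ) [NeZero N] :
    Fintype.card (ZMod N) + Fintype.card (ZMod N) + Fintype.card Bool
      = Fintype.card (ZMod N × Bool) + 2 := by
  simp only [Fintype.card_prod, Fintype.card_bool]
  omega

def cycVal (N : ℕ) {A : Type*} [AddCommGroup A] (u v d : A) :
    ZMod N ⊕ ZMod N ⊕ Bool → A :=
  Sum.elim (fun r => u + r.val • d)
    (Sum.elim (fun c => v - c.val • d) (fun s => if s then -u - v - d else -u - v))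

theorem canonical_cyc (N : ℕ) [NeZero N] (hN : 2 ≤ N) :
    Nonempty (CanonicalGroup ((cycData N hN).bitrade (cyc_euler N)) ≃+ ZMod N) := by
  have : Fact (1 < N) := ⟨by omega⟩
  have hmap : ∀ {B B' : Type} [AddCommGroup B] [AddCommGroup B'] (φ : B →+ B') (u v d : B) (t),
      φ (cycVal N u v d t) = cycVal N (φ u) (φ v) (φ d) t := by
    intro B B' _ _ φ u v d t
    rcases t with r | c | s
    · simp [cycVal]
    · simp [cycVal]
    · cases s <;> simp [cycVal]
  let u' : (ℤ × ℤ) × ZMod N := ((1, 0), 0)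
  let v' : (ℤ × ℤ) × ZMod N := ((0, 1), 0)
  let d' : (ℤ × ℤ) × ZMod N := ((0, 0), 1)
  have hsm : ∀ i : ZMod N, i.val • d' = ((0, 0), i) := by
    intro i
    simp [d']
  refine (cycData N hN).canonical (cyc_euler N) (cycVal N u' v' d') ?_ ?_
  · rintro ⟨i, b⟩
    cases b
    · change (u' + i.val • d') + (v' - i.val • d') + (-u' - v') = 0
      abel
    · change (u' + (i + 1).val • d') + (v' - i.val • d') + (-u' - v' - d') = 0
      rw [hsm, hsm]
      simp [u', v', d']
  intro A _ G hrelG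
  have Ht : ∀ i : ZMod N, G (.inl (i + 1)) + G (.inr (.inl i)) + G (.inr (.inr true)) = 0 :=
    fun i => hrelG (i, true)
  have Hf : ∀ i : ZMod N, G (.inl i) + G (.inr (.inl i)) + G (.inr (.inr false)) = 0 :=
    fun i => hrelG (i, false)
  obtain ⟨u, hu⟩ : ∃ u, u = G (.inl 0) := ⟨_, rfl⟩
  obtain ⟨v, hv⟩ : ∃ v, v = G (.inr (.inl 0)) := ⟨_, rfl⟩
  obtain ⟨d, hd⟩ : ∃ d, d = G (.inl 1) - G (.inl 0) := ⟨_, rfl⟩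
  have hr1 : G (.inl 1) = u + d := by rw [hu, hd]; abel
  have hsf : G (.inr (.inr false)) = - u - v := by
    have := Hf 0
    rw [← hu, ← hv] at this
    rw [← sub_eq_zero, ← this]; abel
  have hst : G (.inr (.inr true)) = - u - v - d := by
    have := Ht 0
    rw [zero_add, ← hv, hr1] at this
    rw [← sub_eq_zero, ← this]; abel
  have hr : ∀ n : ℕ, G (.inl (n : ZMod N)) = u + n • d := by
    intro n
    induction n with
    | zero => simp [hu]
    | succ n ih =>
      have a := Ht n
      have b := Hf n
      rw [hst] at a
      rw [hsf, ih] at b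
      have : G (.inl ((n : ZMod N) + 1)) = u + n • d + d := by
        rw [← sub_eq_zero, ← sub_eq_zero.2 (a.trans b.symm)]; abel
      rw [Nat.cast_succ, this]; module
  have hN0 : N • d = 0 := by
    have := hr N
    rw [ZMod.natCast_self, ← hu] at this
    simpa using this
  have hG : ∀ t, G t = cycVal N u v d t := by
    rintro (i | i | b)
    · have := hr i.val
      rwa [ZMod.natCast_zmod_val] at this
    · have := hr i.val
      rw [ZMod.natCast_zmod_val] at this
      have b := Hf i
      rw [this, hsf] at b
      change _ = v - i.val • d
      rw [← sub_eq_zero, ← b]; abel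
    · cases b
      · exact hsf
      · exact hst
  let ψ : (ℤ × ℤ) × ZMod N →+ A :=
    ((zmultiplesHom _ u).coprod (zmultiplesHom _ v)).coprod (zmodHom N d hN0)
  have pu : ψ u' = u := by simp [ψ, u']
  have pv : ψ v' = v := by simp [ψ, v']
  have pd : ψ d' = d := by simp [ψ, d', zmodHom_one]
  refine ⟨ψ, ?_, ?_⟩
  · intro t
    rw [hmap, pu, pv, pd]
    exact (hG t).symm
  · intro φ hφ
    have eu : φ u = u' := by
      rw [hu, hφ]; simp [cycVal]
    have ev : φ v = v' := by
      rw [hv, hφ]; simp [cycVal]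
    have ed : φ d = d' := by
      rw [hd, map_sub, hφ, hφ]
      change (u' + (1 : ZMod N).val • d') - (u' + (0 : ZMod N).val • d') = d'
      rw [hsm, hsm]
      simp [u', d']
      rfl
    have key : (φ).comp ψ = AddMonoidHom.id _ := by
      apply AddMonoidHom.ext
      rintro ⟨⟨a, b⟩, z⟩
      obtain ⟨z, rfl⟩ := ZMod.intCast_surjective z
      have hh : (((a, b), (z : ZMod N)) : (ℤ × ℤ) × ZMod N) = a • u' + b • v' + z • d' := by
        simp [u', v', d']
      rw [hh]
      simp only [map_add, map_zsmul, AddMonoidHom.comp_apply, pu, pv, pd, eu, ev, ed,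
        AddMonoidHom.id_apply]
    intro z
    exact DFunLike.congr_fun key z

/-- `ℤ/n ⊕ ℤ/m` in Smith normal form. -/
theorem smith (g n' m' : ℕ) (hg : 0 < g) (hn : 0 < n') (hm : 0 < m') (hc : Nat.Coprime n' m') :
    Nonempty ((ZMod g × ZMod (g * (n' * m'))) ≃+ (ZMod (g * n') × ZMod (g * m'))) := by
  have : NeZero (g * n') := ⟨by positivity⟩
  have : NeZero (g * m') := ⟨by positivity⟩
  have : NeZero (g * (n' * m')) := ⟨by positivity⟩
  have : NeZero g := ⟨by positivity⟩
  obtain ⟨a, b, hab⟩ := Int.isCoprime_iff_gcd_eq_one.2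
    (show Int.gcd (n' : ℤ) (m' : ℤ) = 1 by simpa using hc)
  let x : ZMod (g * n') × ZMod (g * m') := (((a * n' : ℤ) : ZMod (g * n')), ((b * m' : ℤ) : ZMod (g * m')))
  let y : ZMod (g * n') × ZMod (g * m') := (-1, 1)
  have e1 : ((g : ZMod (g * n'))) * n' = 0 := by
    have := ZMod.natCast_self (g * n'); push_cast at this; exact this
  have e2 : ((g : ZMod (g * m'))) * m' = 0 := by
    have := ZMod.natCast_self (g * m'); push_cast at this; exact this
  have hx : g • x = 0 := by
    simp only [x, Prod.smul_mk, nsmul_eq_mul]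
    push_cast
    apply Prod.ext
    · change (g : ZMod (g * n')) * (a * n') = 0
      linear_combination (a : ZMod (g * n')) * e1
    · change (g : ZMod (g * m')) * (b * m') = 0
      linear_combination (b : ZMod (g * m')) * e2
  have hy : (g * (n' * m')) • y = 0 := by
    simp only [y, Prod.smul_mk, nsmul_eq_mul]
    push_cast
    apply Prod.ext
    · change (g : ZMod (g * n')) * (n' * m') * (-1) = 0
      linear_combination (-m' : ZMod (g * n')) * e1
    · change (g : ZMod (g * m')) * (n' * m') * 1 = 0
      linear_combination (n' : ZMod (g * m')) * e2
  let F := (zmodHom g x hx).coprod (zmodHom (g * (n' * m')) y hy)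
  have hs : Function.Surjective F := by
    rintro ⟨p, q⟩
    obtain ⟨p, rfl⟩ := ZMod.intCast_surjective p
    obtain ⟨q, rfl⟩ := ZMod.intCast_surjective q
    refine ⟨(p + q) • ((1 : ZMod g), (0 : ZMod (g * (n' * m')))) +
      (-p * b * m' + q * a * n') • ((0 : ZMod g), (1 : ZMod (g * (n' * m')))), ?_⟩
    have f1 : F (1, 0) = x := by simp [F, zmodHom_one]
    have f2 : F (0, 1) = y := by simp [F, zmodHom_one]
    rw [map_add, map_zsmul, map_zsmul, f1, f2]
    have c1 : (a : ZMod (g * n')) * n' + b * m' = 1 := by exact_mod_cast congrArg (Int.cast : ℤ → ZMod (g * n')) hab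
    have c2 : (a : ZMod (g * m')) * n' + b * m' = 1 := by exact_mod_cast congrArg (Int.cast : ℤ → ZMod (g * m')) hab
    apply Prod.ext
    · change (p + q) • ((a * n' : ℤ) : ZMod (g * n')) + (-p * b * m' + q * a * n') • (-1 : ZMod (g * n')) = (p : ZMod (g * n'))
      simp only [zsmul_eq_mul]
      push_cast
      linear_combination (p : ZMod (g * n')) * c1
    · change (p + q) • ((b * m' : ℤ) : ZMod (g * m')) + (-p * b * m' + q * a * n') • (1 : ZMod (g * m')) = (q : ZMod (g * m'))
      simp only [zsmul_eq_mul]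
      push_cast
      linear_combination (q : ZMod (g * m')) * c2
  refine ⟨AddEquiv.ofBijective F ((Fintype.bijective_iff_surjective_and_card F).2 ⟨hs, ?_⟩)⟩
  simp only [Fintype.card_prod, ZMod.card]
  ring


/-- For integers `n, m ≥ 2` with `n ≠ m` there is a spherical latin bitrade whose
canonical group is isomorphic to `ℤ/n ⊕ ℤ/m`. -/
theorem exists_spherical_bitrade_canonical_group_rank_two_distinct
    (n m : ℕ) (hn : 2 ≤ n) (hm : 2 ≤ m) (hnm : n ≠ m) :
    ∃ T : SphericalLatinBitrade,
      Nonempty (CanonicalGroup T ≃+ (ZMod n × ZMod m)) := by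
  obtain ⟨g, n', m', hg, hc, rfl, rfl⟩ := Nat.exists_coprime' (m := n) (n := m)
    (Nat.gcd_pos_of_pos_left _ (by omega))
  rw [mul_comm n' g] at *
  rw [mul_comm m' g] at *
  have hn' : 0 < n' := Nat.pos_of_ne_zero (by rintro rfl; simp at hn)
  have hm' : 0 < m' := Nat.pos_of_ne_zero (by rintro rfl; simp at hm)
  obtain ⟨e⟩ := smith g n' m' hg hn' hm' hc
  by_cases h1 : g = 1
  · subst h1
    have : NeZero (1 * n' * (1 * m')) := ⟨by positivity⟩
    obtain ⟨f⟩ := canonical_cyc (1 * n' * (1 * m')) (by nlinarith)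
    refine ⟨_, ⟨f.trans (ZMod.chineseRemainder ?_).toAddEquiv⟩⟩
    simpa using hc
  · have hk : 2 ≤ n' * m' := by
      by_contra h
      have h2 : n' * m' = 1 := by
        have := Nat.mul_pos hn' hm'
        omega
      apply hnm
      rw [Nat.eq_one_of_mul_eq_one_right h2, Nat.eq_one_of_mul_eq_one_left h2]
    obtain ⟨f⟩ := canonical_main (g := g) (by omega) hk
    exact ⟨_, ⟨f.trans e⟩⟩
end
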